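/- Let D be a countable dense subset of ℝ^N. Let {ν̄_n}_{n≥1} and ν̄ be N-dimensional parametric b-measures on ℝ^N, each with common m-bounds and common Lipschitz l-bounds, such that for each j ≥ 1 the m-bounds {m_j^n}_{n≥1} ∪ {m_j} form an equicontinuous family (for every ε > 0 there is δ > 0 with m_j^n([s,t]) < ε and m_j([s,t]) < ε whenever 0 ≤ t−s < δ, for all n) and the l-bounds {l_j^n}_{n≥1} ∪ {l_j} form a bounded family (there is c_j > 0 with l_j^n([t,t+1]) ≤ c_j and l_j([t,t+1]) ≤ c_j for all t ∈ ℝ and n). Suppose that for each component i, (ν_n^i)_y(I) → (ν^i)_y(I) for every y ∈ D and every compact interval I with rational endpoints, and that y₀^n → y₀ in ℝ^N. Let y(·, ν̄_n, y₀^n) and y(·, ν̄, y₀) denote the solutions of y_i(t) = y_{0,i} + ∫_0^t dν^i_{y(s)} with the corresponding data, defined on their maximal intervals of existence. Then y(·, ν̄_n, y₀^n) → y(·, ν̄, y₀) as n → ∞, uniformly on every compact interval [a,b] contained in the maximal interval of existence of y(·, ν̄, y₀). -/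

import Mathlib

open MeasureTheory Set Filter Topology

/-- A (continuous real) b-measure: a set function on the bounded Borel subsets of `ℝ`
which vanishes on `∅`, is countably additive over countable pairwise disjoint families
of bounded Borel sets with bounded union, and vanishes on singletons. -/
structure IsBMeasure (μ : Set ℝ → ℝ) : Prop where
  empty : μ ∅ = 0
  countably_additive : ∀ A : ℕ → Set ℝ, (∀ n, MeasurableSet (A n)) →
    (∀ n, Bornology.IsBounded (A n)) → Pairwise (Function.onFun Disjoint A) →
    Bornology.IsBounded (⋃ n, A n) →
    HasSum (fun n => μ (A n)) (μ (⋃ n, A n))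
  singleton : ∀ t : ℝ, μ {t} = 0

/-- A locally finite atomless Borel measure on `ℝ`. -/
def GoodMeasure (m : Measure ℝ) : Prop :=
  IsLocallyFiniteMeasure m ∧ ∀ t : ℝ, m {t} = 0

/-- `P` is a finite Borel partition of `A`. -/
def IsBorelPartition (A : Set ℝ) {n : ℕ} (P : Fin n → Set ℝ) : Prop :=
  (∀ i, MeasurableSet (P i)) ∧ Pairwise (Function.onFun Disjoint P) ∧ (⋃ i, P i) = A

/-- `|μ| ≤ m` : total-variation bound of the set function `μ` by the measure `m`,
expressed through finite Borel partitions of bounded Borel sets. -/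
def TVLE (μ : Set ℝ → ℝ) (m : Measure ℝ) : Prop :=
  ∀ A : Set ℝ, Bornology.IsBounded A → MeasurableSet A →
    ∀ (n : ℕ) (P : Fin n → Set ℝ), IsBorelPartition A P →
      ∑ i, |μ (P i)| ≤ (m A).toReal

/-- Partition-sum bound `Σ |μ₁(Aᵢ) - μ₂(Aᵢ)| ≤ c · l(A)` for the difference of two
set functions, over finite Borel partitions of bounded Borel sets. -/
def DiffLE (μ₁ μ₂ : Set ℝ → ℝ) (c : ℝ) (l : Measure ℝ) : Prop :=
  ∀ A : Set ℝ, Bornology.IsBounded A → MeasurableSet A →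
    ∀ (n : ℕ) (P : Fin n → Set ℝ), IsBorelPartition A P →
      ∑ i, |μ₁ (P i) - μ₂ (P i)| ≤ c * (l A).toReal

variable {E : Type*} [NormedAddCommGroup E]

/-- `m` is an m-bound of `ν` on the closed ball of radius `j`. -/
def HasMBound (ν : E → Set ℝ → ℝ) (j : ℕ) (m : Measure ℝ) : Prop :=
  GoodMeasure m ∧ ∀ y : E, ‖y‖ ≤ (j : ℝ) → TVLE (ν y) m

/-- `l` is an l-bound of `ν` on the closed ball of radius `j`, for the modulus `ω`. -/
def HasLBound (ω : ℝ → ℝ) (ν : E → Set ℝ → ℝ) (j : ℕ) (l : Measure ℝ) : Prop :=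
  GoodMeasure l ∧ ∀ y₁ y₂ : E, ‖y₁‖ ≤ (j : ℝ) → ‖y₂‖ ≤ (j : ℝ) →
    DiffLE (ν y₁) (ν y₂) (ω ‖y₁ - y₂‖) l

/-- A non-decreasing family of moduli of continuity `{ω_j}`. -/
structure IsModulusFamily (ω : ℕ → ℝ → ℝ) : Prop where
  continuousOn : ∀ j, ContinuousOn (ω j) (Ici 0)
  monotoneOn : ∀ j, MonotoneOn (ω j) (Ici 0)
  map_zero : ∀ j, ω j 0 = 0
  nonneg : ∀ j x, 0 ≤ x → 0 ≤ ω j x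
  mono_index : ∀ j x, 0 ≤ x → ω j x ≤ ω (j + 1) x

/-- A parametric b-measure on `E` with respect to the family of moduli `ω`. -/
def IsParamBMeasure (ω : ℕ → ℝ → ℝ) (ν : E → Set ℝ → ℝ) : Prop :=
  (∀ y, IsBMeasure (ν y)) ∧
    ∀ j : ℕ, 1 ≤ j → ∃ m l : Measure ℝ, HasMBound ν j m ∧ HasLBound (ω j) ν j l

/-- A tagged partition of `[a,b]`. -/
structure TaggedPartition (a b : ℝ) where
  k : ℕ
  k_pos : 0 < k
  t : ℕ → ℝ
  tag : ℕ → ℝ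
  left : t 0 = a
  right : t k = b
  lt : ∀ i < k, t i < t (i + 1)
  tag_mem : ∀ i < k, tag i ∈ Set.Icc (t i) (t (i + 1))

/-- The mesh of the tagged partition is `< δ`. -/
def TaggedPartition.MeshLT {a b : ℝ} (P : TaggedPartition a b) (δ : ℝ) : Prop :=
  ∀ i < P.k, P.t (i + 1) - P.t i < δ

/-- The Riemann sum of the parametric b-measure `ν` along the curve `y` over the
tagged partition `P`. -/
def RiemannSum (ν : E → Set ℝ → ℝ) (y : ℝ → E) {a b : ℝ} (P : TaggedPartition a b) : ℝ :=
  ∑ i ∈ Finset.range P.k, ν (y (P.tag i)) (Set.Icc (P.t i) (P.t (i + 1)))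

/-- `L = ∫_a^b dν_{y(s)}` : `L` is the limit of the Riemann sums of `ν` along `y`
over tagged partitions of `[a,b]` as the mesh tends to `0`. -/
def IsCurveIntegral (ν : E → Set ℝ → ℝ) (y : ℝ → E) (a b : ℝ) (L : ℝ) : Prop :=
  ∀ ε > 0, ∃ δ > 0, ∀ P : TaggedPartition a b, P.MeshLT δ → |L - RiemannSum ν y P| < ε

/-- A suitable set of moduli of continuity `Θ = {θ_j^{[q₁,q₂]}}`. -/
structure IsSuitableModuli (Θ : ℕ → ℚ → ℚ → ℝ → ℝ) : Prop where
  continuousOn : ∀ (j : ℕ) (q₁ q₂ : ℚ), q₁ < q₂ → ContinuousOn (Θ j q₁ q₂) (Ici 0)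
  monotoneOn : ∀ (j : ℕ) (q₁ q₂ : ℚ), q₁ < q₂ → MonotoneOn (Θ j q₁ q₂) (Ici 0)
  map_zero : ∀ (j : ℕ) (q₁ q₂ : ℚ), q₁ < q₂ → Θ j q₁ q₂ 0 = 0
  nonneg : ∀ (j : ℕ) (q₁ q₂ : ℚ) (x : ℝ), q₁ < q₂ → 0 ≤ x → 0 ≤ Θ j q₁ q₂ x
  mono : ∀ (j₁ j₂ : ℕ) (q₁ q₂ p₁ p₂ : ℚ), j₁ ≤ j₂ → q₁ ≤ p₁ → p₁ < p₂ → p₂ ≤ q₂ →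
    ∀ x : ℝ, 0 ≤ x → Θ j₁ p₁ p₂ x ≤ Θ j₂ q₁ q₂ x

/-- The set `𝒦_j^I` of continuous functions `y : I → E`, `I = [q₁,q₂]`, bounded by `j`
and admitting `θ_j^I` as modulus of continuity. -/
def KSet (E : Type*) [NormedAddCommGroup E] (Θ : ℕ → ℚ → ℚ → ℝ → ℝ)
    (j : ℕ) (q₁ q₂ : ℚ) : Set (ℝ → E) :=
  {y | ContinuousOn y (Set.Icc (q₁ : ℝ) (q₂ : ℝ)) ∧
    (∀ t ∈ Set.Icc (q₁ : ℝ) (q₂ : ℝ), ‖y t‖ ≤ (j : ℝ)) ∧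
    ∀ t₁ ∈ Set.Icc (q₁ : ℝ) (q₂ : ℝ), ∀ t₂ ∈ Set.Icc (q₁ : ℝ) (q₂ : ℝ),
      ‖y t₁ - y t₂‖ ≤ Θ j q₁ q₂ |t₁ - t₂|}

/-- Convergence `ν_n → ν₀` in the topology `σ_Θ` : the integrals along curves of
`𝒦_j^I` converge uniformly, for every `j` and every compact interval `I` with
rational endpoints. -/
def SigmaThetaTendsto {E : Type*} [NormedAddCommGroup E] (Θ : ℕ → ℚ → ℚ → ℝ → ℝ)
    (ν : ℕ → E → Set ℝ → ℝ) (ν₀ : E → Set ℝ → ℝ) : Prop :=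
  ∀ (j : ℕ) (q₁ q₂ : ℚ), q₁ < q₂ → ∀ ε > 0, ∃ n₀ : ℕ, ∀ n ≥ n₀,
    ∀ y ∈ KSet E Θ j q₁ q₂, ∀ L L₀ : ℝ,
      IsCurveIntegral (ν n) y (q₁ : ℝ) (q₂ : ℝ) L →
      IsCurveIntegral ν₀ y (q₁ : ℝ) (q₂ : ℝ) L₀ → |L - L₀| < ε

/-- The time-translate `ν·t` of a parametric b-measure: `(ν·t)_y(A) = ν_y(A + t)`. -/
def BTranslate (ν : E → Set ℝ → ℝ) (t : ℝ) : E → Set ℝ → ℝ :=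
  fun y A => ν y ((fun s => s + t) '' A)

/-- The time-translate `m·t` of a Borel measure: `(m·t)(A) = m(A + t)`. -/
noncomputable def MTranslate (m : Measure ℝ) (t : ℝ) : Measure ℝ :=
  Measure.map (fun s => s - t) m

/-- An N-dimensional parametric b-measure on `E` with common m-bounds `m j` and
common Lipschitz l-bounds `l j`. -/
def IsNDimParamBMeasure {M : ℕ} (νbar : Fin M → E → Set ℝ → ℝ)
    (m l : ℕ → Measure ℝ) : Prop :=
  (∀ i y, IsBMeasure (νbar i y)) ∧
    ∀ j : ℕ, 1 ≤ j → GoodMeasure (m j) ∧ GoodMeasure (l j) ∧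
      (∀ i, ∀ y : E, ‖y‖ ≤ (j : ℝ) → TVLE (νbar i y) (m j)) ∧
      (∀ i, ∀ y₁ y₂ : E, ‖y₁‖ ≤ (j : ℝ) → ‖y₂‖ ≤ (j : ℝ) →
        DiffLE (νbar i y₁) (νbar i y₂) ‖y₁ - y₂‖ (l j))

/-- The oriented curve integral: `∫_b^a := -∫_a^b`. -/
def IsSignedCurveIntegral (ν : E → Set ℝ → ℝ) (y : ℝ → E) (a b : ℝ) (L : ℝ) : Prop :=
  (a ≤ b ∧ IsCurveIntegral ν y a b L) ∨ (b < a ∧ IsCurveIntegral ν y b a (-L))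

/-- `y` is a solution on `S` of the Cauchy problem `y' = ν̄_y`, `y(t₀) = y₀`, for the
N-dimensional parametric b-measure `ν̄`: componentwise,
`y_i(t) = y_{0,i} + ∫_{t₀}^t dν^i_{y(s)}`. -/
def IsSolutionOn {M : ℕ} (νbar : Fin M → EuclideanSpace ℝ (Fin M) → Set ℝ → ℝ)
    (t₀ : ℝ) (y₀ : EuclideanSpace ℝ (Fin M)) (S : Set ℝ)
    (y : ℝ → EuclideanSpace ℝ (Fin M)) : Prop :=
  t₀ ∈ S ∧ y t₀ = y₀ ∧ ContinuousOn y S ∧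
    ∀ t ∈ S, ∀ i : Fin M, IsSignedCurveIntegral (νbar i) y t₀ t (y t i - y₀ i)

/-- `y` is the maximal (noncontinuable) solution, defined on the open interval `S`:
every solution on an interval containing `t₀` is a restriction of `y`. -/
def IsMaximalSolution {M : ℕ} (νbar : Fin M → EuclideanSpace ℝ (Fin M) → Set ℝ → ℝ)
    (t₀ : ℝ) (y₀ : EuclideanSpace ℝ (Fin M)) (S : Set ℝ)
    (y : ℝ → EuclideanSpace ℝ (Fin M)) : Prop :=
  IsSolutionOn νbar t₀ y₀ S y ∧ IsOpen S ∧ S.OrdConnected ∧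
    ∀ S' : Set ℝ, S'.OrdConnected → ∀ z, IsSolutionOn νbar t₀ y₀ S' z →
      S' ⊆ S ∧ Set.EqOn z y S'

/-!
The curve `y` enters the integral equation only through the distribution functions
`(t, d) ↦ primitive (ν i d) t`. Along the sequence these are equicontinuous, since the `m`-bounds
control the variable `t` and the `l`-bounds the variable `d`; convergence on the dense set of
rational times and points of `D` is therefore locally uniform.

Freezing: on a short interval the curve may be replaced by a constant `d`, so that the integral
becomes an increment of `primitive (ν i d)`, at the cost of the oscillation of the curve times the
increment of the `l`-bound. Subtracting the two equations over the cells of a fine mesh and applying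
the discrete Gronwall inequality bounds `y_n - y` for as long as `y_n` stays in a fixed ball.
This bound is better than what is needed to stay in the ball, and a bounded solution extends to the
closure of its interval, so by continuous induction maximal solutions can neither end nor leave the
ball before the end of the compact interval.
-/

/-- The signed distribution function of a b-measure `μ`, normalised to vanish at `0`: it equals
`μ [0, t]` for `0 ≤ t` and `-μ [t, 0]` for `t ≤ 0`, the other term being `μ ∅` or `μ {0}`. -/
def primitive (μ : Set ℝ → ℝ) (t : ℝ) : ℝ := μ (Icc 0 t) - μ (Icc t 0)

namespace IsBMeasure

variable {μ : Set ℝ → ℝ} {A B : Set ℝ} {a b c s t : ℝ}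

theorem union (hμ : IsBMeasure μ) (hA : MeasurableSet A) (hB : MeasurableSet B)
    (hA' : Bornology.IsBounded A) (hB' : Bornology.IsBounded B) (hAB : Disjoint A B) :
    μ (A ∪ B) = μ A + μ B := by
  let f : ℕ → Set ℝ
    | 0 => A
    | 1 => B
    | _ + 2 => ∅
  have hf : ⋃ n, f n = A ∪ B := by
    rw [← union_iUnion_nat_succ, ← union_iUnion_nat_succ (fun n => f (n + 1))]
    simp [f]
  have hsum : HasSum (fun n => μ (f n)) (μ (A ∪ B)) := hf ▸ hμ.countably_additive f
    (by rintro (_ | _ | _) <;> simp [f, hA, hB])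
    (by rintro (_ | _ | _) <;> simp [f, hA', hB'])
    (by rintro (_ | _ | m) (_ | _ | n) h <;> simp_all [Function.onFun, f, hAB.symm])
    (hf ▸ hA'.union hB')
  have hsum' : HasSum (fun n => μ (f n)) (∑ n ∈ Finset.range 2, μ (f n)) := by
    refine hasSum_sum_of_ne_finset_zero ?_
    rintro (_ | _ | n) <;> simp [f, hμ.empty]
  rw [hsum.unique hsum', Finset.sum_range_succ, Finset.sum_range_one]

theorem Icc_self (hμ : IsBMeasure μ) : μ (Icc a a) = 0 := by
  rw [Set.Icc_self, hμ.singleton]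

theorem Icc_add_Ioc (hμ : IsBMeasure μ) (hab : a ≤ b) (hbc : b ≤ c) :
    μ (Icc a b) + μ (Ioc b c) = μ (Icc a c) := by
  rw [← Icc_union_Ioc_eq_Icc hab hbc, hμ.union measurableSet_Icc measurableSet_Ioc
    (Metric.isBounded_Icc a b) (Metric.isBounded_Ioc b c)]
  exact Set.disjoint_left.2 fun x hx hx' => hx'.1.not_ge hx.2

theorem Icc_add_Icc (hμ : IsBMeasure μ) (hab : a ≤ b) (hbc : b ≤ c) :
    μ (Icc a b) + μ (Icc b c) = μ (Icc a c) := by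
  rw [← hμ.Icc_add_Ioc hab hbc, ← hμ.Icc_add_Ioc le_rfl hbc, hμ.Icc_self, zero_add]

theorem primitive_sub_primitive (hμ : IsBMeasure μ) (hst : s ≤ t) :
    primitive μ t - primitive μ s = μ (Icc s t) := by
  have nonneg_side {x : ℝ} (hx : 0 ≤ x) : μ (Icc x 0) = 0 := by
    rcases hx.eq_or_lt with rfl | hx
    · exact hμ.Icc_self
    · rw [Icc_eq_empty hx.not_ge, hμ.empty]
  have nonpos_side {x : ℝ} (hx : x ≤ 0) : μ (Icc 0 x) = 0 := by
    rcases hx.eq_or_lt with rfl | hx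
    · exact hμ.Icc_self
    · rw [Icc_eq_empty hx.not_ge, hμ.empty]
  unfold primitive
  rcases le_total 0 s with hs | hs
  · linarith [nonneg_side hs, nonneg_side (hs.trans hst), hμ.Icc_add_Icc hs hst]
  rcases le_total 0 t with ht | ht
  · linarith [nonpos_side hs, nonneg_side ht, hμ.Icc_add_Icc hs ht]
  · linarith [nonpos_side hs, nonpos_side ht, hμ.Icc_add_Icc hst ht]

theorem primitive_zero (hμ : IsBMeasure μ) : primitive μ 0 = 0 := by
  rw [primitive, hμ.Icc_self, sub_self]

end IsBMeasure

namespace GoodMeasure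

variable {m : Measure ℝ}

theorem isBMeasure (hm : GoodMeasure m) : IsBMeasure m.real := by
  have := hm.1
  refine ⟨measureReal_empty, fun A hA _ hdisj hbdd => ?_, fun t => by simp [Measure.real, hm.2 t]⟩
  have hsum := measure_iUnion (μ := m) hdisj hA
  have hfin : ∑' n, m (A n) ≠ ⊤ := hsum ▸ hbdd.measure_lt_top.ne
  simpa only [Measure.real, hsum, ENNReal.tsum_toReal_eq (ENNReal.ne_top_of_tsum_ne_top hfin)]
    using ENNReal.hasSum_toReal hfin

theorem monotone_primitive (hm : GoodMeasure m) : Monotone (primitive m.real) := fun _ _ hst =>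
  sub_nonneg.1 <| hm.isBMeasure.primitive_sub_primitive hst ▸ measureReal_nonneg

theorem continuous_primitive (hm : GoodMeasure m) : Continuous (primitive m.real) := by
  have := hm.1
  have : NullSingletonClass m := ⟨hm.2⟩
  have hprim : primitive m.real = fun t => ∫ _ in (0 : ℝ)..t, (1 : ℝ) ∂m := by
    ext t
    rw [intervalIntegral.integral_const', smul_eq_mul, mul_one, primitive]
    simp only [Measure.real, Ioc_ae_eq_Icc.measure_eq]
  rw [hprim]
  exact intervalIntegral.continuous_primitive (fun _ _ => intervalIntegrable_const) 0

end GoodMeasure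

theorem isBorelPartition_const {A : Set ℝ} (hA : MeasurableSet A) :
    IsBorelPartition A (fun _ : Fin 1 => A) :=
  ⟨fun _ => hA, Subsingleton.pairwise, iUnion_const A⟩

namespace TVLE

variable {μ : Set ℝ → ℝ} {m : Measure ℝ} {s t : ℝ}

theorem abs_Icc_le (h : TVLE μ m) : |μ (Icc s t)| ≤ m.real (Icc s t) := by
  simpa [Measure.real] using h _ (Metric.isBounded_Icc s t) measurableSet_Icc 1 _
    (isBorelPartition_const measurableSet_Icc)

theorem abs_primitive_sub_le (h : TVLE μ m) (hμ : IsBMeasure μ) (hm : GoodMeasure m) (s t : ℝ) :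
    |primitive μ t - primitive μ s| ≤ |primitive m.real t - primitive m.real s| := by
  wlog hst : s ≤ t generalizing s t
  · simpa only [abs_sub_comm] using this t s (le_of_not_ge hst)
  rw [hμ.primitive_sub_primitive hst, hm.isBMeasure.primitive_sub_primitive hst]
  exact h.abs_Icc_le.trans (le_abs_self _)

theorem continuous_primitive (h : TVLE μ m) (hμ : IsBMeasure μ) (hm : GoodMeasure m) :
    Continuous (primitive μ) := by
  refine continuous_iff_continuousAt.2 fun s => ?_
  refine tendsto_iff_norm_sub_tendsto_zero.2 <| squeeze_zero (fun _ => norm_nonneg _)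
    (h.abs_primitive_sub_le hμ hm s) ?_
  exact tendsto_iff_norm_sub_tendsto_zero.1 (hm.continuous_primitive.tendsto s)

end TVLE

namespace DiffLE

variable {μ₁ μ₂ : Set ℝ → ℝ} {l : Measure ℝ} {c s t : ℝ}

theorem abs_Icc_sub_le (h : DiffLE μ₁ μ₂ c l) :
    |μ₁ (Icc s t) - μ₂ (Icc s t)| ≤ c * l.real (Icc s t) := by
  simpa [Measure.real] using h _ (Metric.isBounded_Icc s t) measurableSet_Icc 1 _
    (isBorelPartition_const measurableSet_Icc)

theorem abs_primitive_sub_le (h : DiffLE μ₁ μ₂ c l) (hμ₁ : IsBMeasure μ₁) (hμ₂ : IsBMeasure μ₂)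
    (hl : GoodMeasure l) (s t : ℝ) :
    |(primitive μ₁ t - primitive μ₁ s) - (primitive μ₂ t - primitive μ₂ s)| ≤
      c * |primitive l.real t - primitive l.real s| := by
  wlog hst : s ≤ t generalizing s t
  · rw [← abs_neg, abs_sub_comm (primitive l.real t)]
    convert this t s (le_of_not_ge hst) using 2
    ring
  rw [hμ₁.primitive_sub_primitive hst, hμ₂.primitive_sub_primitive hst,
    hl.isBMeasure.primitive_sub_primitive hst, abs_of_nonneg measureReal_nonneg]
  exact h.abs_Icc_sub_le

end DiffLE

namespace TaggedPartition

variable {a b c δ : ℝ}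

theorem monotoneOn_t (P : TaggedPartition a b) : MonotoneOn P.t (Iic P.k) := by
  intro i _ j hj hij
  induction j, hij using Nat.le_induction with
  | base => exact le_rfl
  | succ n _ ih => exact (ih (Nat.le_of_succ_le hj)).trans (P.lt n hj).le

theorem t_mem_Icc (P : TaggedPartition a b) {i : ℕ} (hi : i ≤ P.k) : P.t i ∈ Icc a b := by
  constructor
  · simpa only [P.left] using P.monotoneOn_t (Nat.zero_le _) hi (Nat.zero_le i)
  · simpa only [P.right] using P.monotoneOn_t hi self_mem_Iic hi

/-- The partition of `[a, b]` into `n` cells of equal length, tagged at their left endpoints. -/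
noncomputable def uniform (hab : a < b) (n : ℕ) (hn : 0 < n) : TaggedPartition a b where
  k := n
  k_pos := hn
  t i := a + i * ((b - a) / n)
  tag i := a + i * ((b - a) / n)
  left := by simp
  right := by field_simp; ring
  lt i _ := by
    have : 0 < (b - a) / n := div_pos (sub_pos.2 hab) (by exact_mod_cast hn)
    push_cast
    linarith
  tag_mem i _ := by
    have : 0 < (b - a) / n := div_pos (sub_pos.2 hab) (by exact_mod_cast hn)
    refine ⟨le_rfl, ?_⟩
    push_cast
    linarith

theorem exists_meshLT (hab : a < b) (hδ : 0 < δ) : ∃ P : TaggedPartition a b, P.MeshLT δ := by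
  obtain ⟨n, hn⟩ := exists_nat_gt ((b - a) / δ)
  have hn₀ : (0 : ℝ) < n := (div_nonneg (sub_pos.2 hab).le hδ.le).trans_lt hn
  refine ⟨uniform hab n (by exact_mod_cast hn₀), fun i _ => ?_⟩
  calc a + (i + 1 : ℕ) * ((b - a) / n) - (a + i * ((b - a) / n)) = (b - a) / n := by
        push_cast; ring
    _ < δ := (div_lt_comm₀ hδ hn₀).1 hn

/-- The tagged partition of `[a, c]` whose cells are those of `P` followed by those of `Q`. -/
def concat (P : TaggedPartition a b) (Q : TaggedPartition b c) : TaggedPartition a c where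
  k := P.k + Q.k
  k_pos := Nat.add_pos_left P.k_pos _
  t i := if i < P.k then P.t i else Q.t (i - P.k)
  tag i := if i < P.k then P.tag i else Q.tag (i - P.k)
  left := by simp [P.k_pos, P.left]
  right := by simp [Q.right]
  lt i hi := by
    rcases lt_trichotomy (i + 1) P.k with h | h | h
    · simpa [h, Nat.lt_of_succ_lt h] using P.lt i (Nat.lt_of_succ_lt h)
    · have hi' : i < P.k := h ▸ i.lt_succ_self
      simpa [hi', h, Q.left, P.right] using P.lt i hi'
    · obtain ⟨r, rfl⟩ := Nat.exists_eq_add_of_le (Nat.lt_succ_iff.1 h)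
      simpa [add_assoc] using Q.lt r (by omega)
  tag_mem i hi := by
    rcases lt_trichotomy (i + 1) P.k with h | h | h
    · simpa [h, Nat.lt_of_succ_lt h] using P.tag_mem i (Nat.lt_of_succ_lt h)
    · have hi' : i < P.k := h ▸ i.lt_succ_self
      simpa [hi', h, Q.left, P.right] using P.tag_mem i hi'
    · obtain ⟨r, rfl⟩ := Nat.exists_eq_add_of_le (Nat.lt_succ_iff.1 h)
      simpa [add_assoc] using Q.tag_mem r (by omega)

theorem concat_t_of_le (P : TaggedPartition a b) (Q : TaggedPartition b c) {i : ℕ}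
    (hi : i ≤ P.k) : (P.concat Q).t i = P.t i := by
  rcases hi.lt_or_eq with h | rfl
  · simp [concat, h]
  · simp [concat, Q.left, P.right]

theorem concat_t_add (P : TaggedPartition a b) (Q : TaggedPartition b c) (i : ℕ) :
    (P.concat Q).t (P.k + i) = Q.t i := by
  simp [concat]

theorem MeshLT.concat {P : TaggedPartition a b} {Q : TaggedPartition b c} (hP : P.MeshLT δ)
    (hQ : Q.MeshLT δ) : (P.concat Q).MeshLT δ := by
  intro i (hi : i < P.k + Q.k)
  rcases lt_or_ge i P.k with h | h
  · rw [concat_t_of_le _ _ h.le, concat_t_of_le _ _ h]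
    exact hP i h
  · obtain ⟨r, rfl⟩ := Nat.exists_eq_add_of_le h
    rw [add_assoc, concat_t_add, concat_t_add]
    exact hQ r (by omega)

theorem riemannSum_concat {F : Type*} (ν : F → Set ℝ → ℝ) (y : ℝ → F) (P : TaggedPartition a b)
    (Q : TaggedPartition b c) :
    RiemannSum ν y (P.concat Q) = RiemannSum ν y P + RiemannSum ν y Q := by
  unfold RiemannSum
  change ∑ i ∈ Finset.range (P.k + Q.k), _ = _
  rw [Finset.sum_range_add]
  congr 1
  · refine Finset.sum_congr rfl fun i hi => ?_
    have hi : i < P.k := Finset.mem_range.1 hi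
    rw [concat_t_of_le _ _ hi.le, concat_t_of_le _ _ hi]
    simp [concat, hi]
  · refine Finset.sum_congr rfl fun i _ => ?_
    rw [add_assoc, concat_t_add, concat_t_add]
    simp [concat]

end TaggedPartition

theorem abs_riemannSum_sub_le {F : Type*} {ν : F → Set ℝ → ℝ} {y : ℝ → F} {a b : ℝ} {G H : ℝ → ℝ}
    (P : TaggedPartition a b)
    (hP : ∀ i < P.k, |ν (y (P.tag i)) (Icc (P.t i) (P.t (i + 1))) -
      (G (P.t (i + 1)) - G (P.t i))| ≤ H (P.t (i + 1)) - H (P.t i)) :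
    |RiemannSum ν y P - (G b - G a)| ≤ H b - H a := by
  have telescope (F : ℝ → ℝ) :
      F b - F a = ∑ i ∈ Finset.range P.k, (F (P.t (i + 1)) - F (P.t i)) := by
    rw [Finset.sum_range_sub (fun i => F (P.t i)), P.left, P.right]
  rw [telescope G, telescope H, RiemannSum, ← Finset.sum_sub_distrib]
  exact (Finset.abs_sum_le_sum_abs _ _).trans
    (Finset.sum_le_sum fun i hi => hP i (Finset.mem_range.1 hi))

/-- On every cell `[s, t]` with endpoints in `J` and every tag `u ∈ [s, t]`, the summand
`ν_{y(u)} [s, t]` of a Riemann sum is approximated by the increment of `G`, up to the increment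
of `H`. -/
def CellEstimate {F : Type*} (ν : F → Set ℝ → ℝ) (y : ℝ → F) (G H : ℝ → ℝ) (J : Set ℝ) : Prop :=
  ∀ s ∈ J, ∀ t ∈ J, ∀ u ∈ Icc s t, |ν (y u) (Icc s t) - (G t - G s)| ≤ H t - H s

theorem CellEstimate.mono {F : Type*} {ν : F → Set ℝ → ℝ} {y : ℝ → F} {G H : ℝ → ℝ} {J J' : Set ℝ}
    (h : CellEstimate ν y G H J) (hJ : J' ⊆ J) : CellEstimate ν y G H J' :=
  fun s hs t ht => h s (hJ hs) t (hJ ht)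

namespace IsCurveIntegral

variable {F : Type*} {ν : F → Set ℝ → ℝ} {y : ℝ → F} {a b c K L : ℝ} {G H : ℝ → ℝ}

theorem sub_left (hac : IsCurveIntegral ν y a c L) (hab : IsCurveIntegral ν y a b K)
    (h : a < b) : IsCurveIntegral ν y b c (L - K) := by
  intro ε hε
  obtain ⟨δ₁, hδ₁, h₁⟩ := hac (ε / 2) (half_pos hε)
  obtain ⟨δ₂, hδ₂, h₂⟩ := hab (ε / 2) (half_pos hε)
  obtain ⟨P, hP⟩ := TaggedPartition.exists_meshLT h (lt_min hδ₁ hδ₂)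
  refine ⟨δ₁, hδ₁, fun Q hQ => ?_⟩
  have hPQ := h₁ (P.concat Q) (.concat (fun i hi => (hP i hi).trans_le (min_le_left _ _)) hQ)
  have hP' := h₂ P fun i hi => (hP i hi).trans_le (min_le_right _ _)
  rw [TaggedPartition.riemannSum_concat] at hPQ
  rw [abs_lt] at hPQ hP' ⊢
  constructor <;> linarith

theorem sub_right (hac : IsCurveIntegral ν y a c L) (hbc : IsCurveIntegral ν y b c K)
    (h : b < c) : IsCurveIntegral ν y a b (L - K) := by
  intro ε hε
  obtain ⟨δ₁, hδ₁, h₁⟩ := hac (ε / 2) (half_pos hε)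
  obtain ⟨δ₂, hδ₂, h₂⟩ := hbc (ε / 2) (half_pos hε)
  obtain ⟨Q, hQ⟩ := TaggedPartition.exists_meshLT h (lt_min hδ₁ hδ₂)
  refine ⟨δ₁, hδ₁, fun P hP => ?_⟩
  have hPQ := h₁ (P.concat Q) (hP.concat fun i hi => (hQ i hi).trans_le (min_le_left _ _))
  have hQ' := h₂ Q fun i hi => (hQ i hi).trans_le (min_le_right _ _)
  rw [TaggedPartition.riemannSum_concat] at hPQ
  rw [abs_lt] at hPQ hQ' ⊢
  constructor <;> linarith

theorem abs_sub_sub_le (h : IsCurveIntegral ν y a b L) (hab : a < b)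
    (hGH : CellEstimate ν y G H (Icc a b)) : |L - (G b - G a)| ≤ H b - H a := by
  refine le_of_forall_pos_le_add fun ε hε => ?_
  obtain ⟨δ, hδ, hL⟩ := h ε hε
  obtain ⟨P, hP⟩ := TaggedPartition.exists_meshLT hab hδ
  have hsum := abs_riemannSum_sub_le (ν := ν) (y := y) P fun i hi =>
    hGH _ (P.t_mem_Icc hi.le) _ (P.t_mem_Icc hi) _ (P.tag_mem i hi)
  linarith [abs_sub_le L (RiemannSum ν y P) (G b - G a), hL P hP]

end IsCurveIntegral

namespace IsSignedCurveIntegral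

variable {F : Type*} {ν : F → Set ℝ → ℝ} {y : ℝ → F} {a b L : ℝ}

theorem of_le (h : IsSignedCurveIntegral ν y a b L) (hab : a ≤ b) : IsCurveIntegral ν y a b L :=
  h.elim And.right fun h' => absurd hab h'.1.not_ge

theorem of_lt (h : IsSignedCurveIntegral ν y a b L) (hba : b < a) :
    IsCurveIntegral ν y b a (-L) :=
  h.elim (fun h' => absurd hba h'.1.not_gt) And.right

end IsSignedCurveIntegral

namespace IsNDimParamBMeasure

variable {N : ℕ} {ν : Fin N → E → Set ℝ → ℝ} {m l : ℕ → Measure ℝ} {y : ℝ → E} {a b ρ : ℝ}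
  {d : E} {j : ℕ}

theorem cellEstimate_zero (hν : IsNDimParamBMeasure ν m l) (hj : 1 ≤ j)
    (hy : ∀ u ∈ Icc a b, ‖y u‖ ≤ j) (i : Fin N) :
    CellEstimate (ν i) y 0 (primitive (m j).real) (Icc a b) := by
  intro s hs t ht u hu
  obtain ⟨hm, -, hbound, -⟩ := hν.2 j hj
  rw [Pi.zero_apply, Pi.zero_apply, sub_self, sub_zero,
    hm.isBMeasure.primitive_sub_primitive (hu.1.trans hu.2)]
  exact (hbound i _ (hy u ⟨hs.1.trans hu.1, hu.2.trans ht.2⟩)).abs_Icc_le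

theorem cellEstimate_primitive (hν : IsNDimParamBMeasure ν m l) (hj : 1 ≤ j)
    (hy : ∀ u ∈ Icc a b, ‖y u‖ ≤ j) (hd : ‖d‖ ≤ j) (hρ : ∀ u ∈ Icc a b, ‖y u - d‖ ≤ ρ)
    (i : Fin N) :
    CellEstimate (ν i) y (primitive (ν i d)) (fun r => ρ * primitive (l j).real r) (Icc a b) := by
  intro s hs t ht u hu
  obtain ⟨-, hl, -, hdiff⟩ := hν.2 j hj
  have hst := hu.1.trans hu.2
  have hu' : u ∈ Icc a b := ⟨hs.1.trans hu.1, hu.2.trans ht.2⟩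
  rw [(hν.1 i d).primitive_sub_primitive hst, ← mul_sub,
    hl.isBMeasure.primitive_sub_primitive hst]
  exact (hdiff i _ _ (hy u hu') hd).abs_Icc_sub_le.trans
    (mul_le_mul_of_nonneg_right (hρ u hu') measureReal_nonneg)

end IsNDimParamBMeasure

theorem norm_le_mul_of_forall_abs_apply_le {N : ℕ} {v : EuclideanSpace ℝ (Fin N)} {ρ : ℝ}
    (h : ∀ i, |v i| ≤ ρ) : ‖v‖ ≤ N * ρ := by
  have hsum : ‖v‖ ≤ ∑ i, |v i| := by
    rw [EuclideanSpace.norm_eq]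
    exact Real.sqrt_le_iff.2 ⟨Finset.sum_nonneg fun i _ => abs_nonneg _,
      Finset.sum_sq_le_sq_sum_of_nonneg fun i _ => abs_nonneg _⟩
  simpa using hsum.trans (Finset.sum_le_sum fun i _ => h i)

/-- On the interval `J`, the increment of `f` over `[s, t]` is that of the primitive of the frozen
b-measure `ν_d`, up to the oscillation of the curve `z` around `d` times the increment of `ℓ`. This
is the integrated form of `f` being an integral of `ν` along `z`; unlike the definition by Riemann
sums it compares well with other curves and passes to limits. -/
def FreezingEstimate (ν : E → Set ℝ → ℝ) (ℓ : ℝ → ℝ) (R : ℝ) (z : ℝ → E) (f : ℝ → ℝ)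
    (J : Set ℝ) : Prop :=
  ∀ s ∈ J, ∀ t ∈ J, s ≤ t → ∀ d, ‖d‖ ≤ R → ∀ ρ, (∀ u ∈ Icc s t, ‖z u - d‖ ≤ ρ) →
    |(f t - f s) - (primitive (ν d) t - primitive (ν d) s)| ≤ ρ * (ℓ t - ℓ s)

namespace IsSolutionOn

variable {N : ℕ} {ν : Fin N → EuclideanSpace ℝ (Fin N) → Set ℝ → ℝ} {m l : ℕ → Measure ℝ}
  {t₀ s t : ℝ} {y₀ : EuclideanSpace ℝ (Fin N)} {S J : Set ℝ} {y : ℝ → EuclideanSpace ℝ (Fin N)}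
  {G H : ℝ → ℝ} {j : ℕ}

theorem isCurveIntegral_of_le (h : IsSolutionOn ν t₀ y₀ S y) (hs : s ∈ S) (ht : t ∈ S)
    (hs₀ : t₀ ≤ s) (hst : s < t) (i : Fin N) : IsCurveIntegral (ν i) y s t (y t i - y s i) := by
  obtain ⟨-, hy₀, -, hint⟩ := h
  have htop := (hint t ht i).of_le (hs₀.trans hst.le)
  rcases hs₀.eq_or_lt with rfl | hs₀
  · rwa [hy₀]
  · simpa using htop.sub_left ((hint s hs i).of_le hs₀.le) hs₀

theorem isCurveIntegral_of_ge (h : IsSolutionOn ν t₀ y₀ S y) (hs : s ∈ S) (ht : t ∈ S)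
    (ht₀ : t ≤ t₀) (hst : s < t) (i : Fin N) : IsCurveIntegral (ν i) y s t (y t i - y s i) := by
  obtain ⟨-, hy₀, -, hint⟩ := h
  have hbot := (hint s hs i).of_lt (hst.trans_le ht₀)
  rcases ht₀.eq_or_lt with rfl | ht₀
  · simpa [hy₀] using hbot
  · convert hbot.sub_right ((hint t ht i).of_lt ht₀) ht₀ using 1
    ring

theorem abs_sub_sub_le (h : IsSolutionOn ν t₀ y₀ S y) (hs : s ∈ S) (ht : t ∈ S) (hst : s ≤ t)
    (i : Fin N) (hGH : CellEstimate (ν i) y G H (Icc s t)) :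
    |(y t i - y s i) - (G t - G s)| ≤ H t - H s := by
  rcases hst.eq_or_lt with rfl | hst
  · simp
  rcases le_or_gt t₀ s with hs₀ | hs₀
  · exact (h.isCurveIntegral_of_le hs ht hs₀ hst i).abs_sub_sub_le hst hGH
  rcases le_or_gt t t₀ with ht₀ | ht₀
  · exact (h.isCurveIntegral_of_ge hs ht ht₀ hst i).abs_sub_sub_le hst hGH
  have hleft := (h.isCurveIntegral_of_ge hs h.1 le_rfl hs₀ i).abs_sub_sub_le hs₀
    (hGH.mono (Icc_subset_Icc_right ht₀.le))
  have hright := (h.isCurveIntegral_of_le h.1 ht le_rfl ht₀ i).abs_sub_sub_le ht₀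
    (hGH.mono (Icc_subset_Icc_left hs₀.le))
  rw [abs_le] at hleft hright ⊢
  constructor <;> linarith

theorem freezingEstimate (h : IsSolutionOn ν t₀ y₀ S y) (hν : IsNDimParamBMeasure ν m l)
    (hj : 1 ≤ j) (hJ : J.OrdConnected) (hJS : J ⊆ S) (hy : ∀ u ∈ J, ‖y u‖ ≤ j) (i : Fin N) :
    FreezingEstimate (ν i) (primitive (l j).real) j y (y · i) J := by
  intro s hs t ht hst d hd ρ hρ
  rw [mul_sub]
  exact h.abs_sub_sub_le (hJS hs) (hJS ht) hst i
    (hν.cellEstimate_primitive hj (fun u hu => hy u (hJ.out hs ht hu)) hd hρ i)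

theorem norm_sub_le (h : IsSolutionOn ν t₀ y₀ S y) (hν : IsNDimParamBMeasure ν m l)
    (hj : 1 ≤ j) (hJ : J.OrdConnected) (hJS : J ⊆ S) (hy : ∀ u ∈ J, ‖y u‖ ≤ j)
    (hs : s ∈ J) (ht : t ∈ J) :
    ‖y t - y s‖ ≤ N * |primitive (m j).real t - primitive (m j).real s| := by
  wlog hst : s ≤ t generalizing s t
  · simpa only [norm_sub_rev, abs_sub_comm] using this ht hs (le_of_not_ge hst)
  refine norm_le_mul_of_forall_abs_apply_le fun i => le_trans ?_ (le_abs_self _)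
  simpa using h.abs_sub_sub_le (hJS hs) (hJS ht) hst i
    (hν.cellEstimate_zero hj (fun u hu => hy u (hJ.out hs ht hu)) i)

end IsSolutionOn

namespace FreezingEstimate

variable {ν : E → Set ℝ → ℝ} {ℓ f : ℝ → ℝ} {R : ℝ} {z : ℝ → E} {J : Set ℝ} {a b : ℝ}

theorem mono (h : FreezingEstimate ν ℓ R z f J) {J' : Set ℝ} (hJ : J' ⊆ J) :
    FreezingEstimate ν ℓ R z f J' :=
  fun s hs t ht => h s (hJ hs) t (hJ ht)

theorem congr (h : FreezingEstimate ν ℓ R z f J) (hJ : J.OrdConnected) {z' : ℝ → E} {f' : ℝ → ℝ}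
    (hz : EqOn z z' J) (hf : EqOn f f' J) : FreezingEstimate ν ℓ R z' f' J := by
  intro s hs t ht hst d hd ρ hρ
  rw [← hf hs, ← hf ht]
  exact h s hs t ht hst d hd ρ fun u hu => (hz (hJ.out hs ht hu)).symm ▸ hρ u hu

theorem abs_sub_sub_le (h : FreezingEstimate ν ℓ R z f J) {s t : ℝ} (hs : s ∈ J) (ht : t ∈ J)
    {d : E} (hd : ‖d‖ ≤ R) {ρ : ℝ} (hρ : ∀ u ∈ uIcc s t, ‖z u - d‖ ≤ ρ) :
    |(f t - f s) - (primitive (ν d) t - primitive (ν d) s)| ≤ ρ * |ℓ t - ℓ s| := by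
  wlog hst : s ≤ t generalizing s t
  · rw [← abs_neg, abs_sub_comm (ℓ t)]
    convert this ht hs (by rwa [uIcc_comm]) (le_of_not_ge hst) using 2
    ring
  rw [uIcc_of_le hst] at hρ
  have hρ₀ : 0 ≤ ρ := (norm_nonneg _).trans (hρ s (left_mem_Icc.2 hst))
  exact (h s hs t ht hst d hd ρ hρ).trans (mul_le_mul_of_nonneg_left (le_abs_self _) hρ₀)

theorem isCurveIntegral (h : FreezingEstimate ν ℓ R z f (Icc a b)) (hν : ∀ d, IsBMeasure (ν d))
    (hz : ContinuousOn z (Icc a b)) (hzR : ∀ u ∈ Icc a b, ‖z u‖ ≤ R) :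
    IsCurveIntegral ν z a b (f b - f a) := by
  intro ε hε
  obtain ⟨η, hη, hηε⟩ := exists_pos_mul_lt hε (ℓ b - ℓ a)
  obtain ⟨δ, hδ, hosc⟩ :=
    Metric.uniformContinuousOn_iff.1 (isCompact_Icc.uniformContinuousOn_of_continuous hz) η hη
  refine ⟨δ, hδ, fun P hP => ?_⟩
  have hcell : ∀ i < P.k, |ν (z (P.tag i)) (Icc (P.t i) (P.t (i + 1))) -
      (f (P.t (i + 1)) - f (P.t i))| ≤ η * ℓ (P.t (i + 1)) - η * ℓ (P.t i) := by
    intro i hi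
    have hleft := P.t_mem_Icc hi.le
    have hright := P.t_mem_Icc hi
    have htag := P.tag_mem i hi
    have htag' : P.tag i ∈ Icc a b := ⟨hleft.1.trans htag.1, htag.2.trans hright.2⟩
    rw [← (hν _).primitive_sub_primitive (P.lt i hi).le, abs_sub_comm, ← mul_sub]
    refine h _ hleft _ hright (P.lt i hi).le _ (hzR _ htag') _ fun u hu => ?_
    rw [← dist_eq_norm]
    refine (hosc u ⟨hleft.1.trans hu.1, hu.2.trans hright.2⟩ _ htag' ?_).le
    exact (Real.dist_le_of_mem_Icc hu htag).trans_lt (hP i hi)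
  calc |f b - f a - RiemannSum ν z P| = |RiemannSum ν z P - (f b - f a)| := abs_sub_comm _ _
    _ ≤ η * ℓ b - η * ℓ a := abs_riemannSum_sub_le (H := fun r => η * ℓ r) P hcell
    _ < ε := by linarith

theorem Icc_of_Ioo (h : FreezingEstimate ν ℓ R z f (Ioo a b)) (hf : ContinuousOn f (Icc a b))
    (hℓ : Continuous ℓ) (hν : ∀ d, ‖d‖ ≤ R → Continuous (primitive (ν d))) :
    FreezingEstimate ν ℓ R z f (Icc a b) := by
  intro s hs t ht hst d hd ρ hρ
  rcases hst.eq_or_lt with rfl | hst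
  · simp
  obtain ⟨c, hsc, hct⟩ := exists_between hst
  have hclosure : closure (Ioo s c ×ˢ Ioo c t) = Icc s c ×ˢ Icc c t := by
    rw [closure_prod_eq, closure_Ioo hsc.ne, closure_Ioo hct.ne]
  have hcont := hν d hd
  have hs_sub : MapsTo Prod.fst (Icc s c ×ˢ Icc c t) (Icc a b) := fun p hp =>
    ⟨hs.1.trans hp.1.1, hp.1.2.trans (hct.le.trans ht.2)⟩
  have ht_sub : MapsTo Prod.snd (Icc s c ×ˢ Icc c t) (Icc a b) := fun p hp =>
    ⟨(hs.1.trans hsc.le).trans hp.2.1, hp.2.2.trans ht.2⟩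
  refine le_on_closure (s := Ioo s c ×ˢ Ioo c t) (x := (s, t))
    (f := fun p => |(f p.2 - f p.1) - (primitive (ν d) p.2 - primitive (ν d) p.1)|)
    (g := fun p => ρ * (ℓ p.2 - ℓ p.1)) ?_ ?_ ?_ ?_
  · rintro ⟨p, q⟩ ⟨hp, hq⟩
    exact h p ⟨hs.1.trans_lt hp.1, (hp.2.trans hct).trans_le ht.2⟩ q
      ⟨hs.1.trans_lt (hsc.trans hq.1), hq.2.trans_le ht.2⟩ (hp.2.trans hq.1).le d hd ρ
      fun u hu => hρ u ⟨hp.1.le.trans hu.1, hu.2.trans hq.2.le⟩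
  · rw [hclosure]
    exact (((hf.comp continuousOn_snd ht_sub).sub (hf.comp continuousOn_fst hs_sub)).sub
      (by fun_prop)).abs
  · fun_prop
  · rw [hclosure]
    exact ⟨⟨le_rfl, hsc.le⟩, ⟨hct.le, le_rfl⟩⟩

end FreezingEstimate

theorem exists_tendsto_of_norm_sub_le {X F : Type*} [TopologicalSpace X] [NormedAddCommGroup F]
    [CompleteSpace F] {y : X → F} {g : X → ℝ} {I : Set X} {x : X} {C : ℝ} (hx : x ∈ closure I)
    (hg : ContinuousAt g x) (h : ∀ s ∈ I, ∀ t ∈ I, ‖y t - y s‖ ≤ C * |g t - g s|) :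
    ∃ v, Tendsto y (𝓝[I] x) (𝓝 v) := by
  have := mem_closure_iff_nhdsWithin_neBot.1 hx
  refine cauchy_map_iff_exists_tendsto.1 (cauchy_map_iff'.2 ?_)
  have hgI : Tendsto g (𝓝[I] x) (𝓝 (g x)) := hg.tendsto.mono_left nhdsWithin_le_nhds
  have hdiff : Tendsto (fun p : X × X => C * |g p.2 - g p.1|) (𝓝[I] x ×ˢ 𝓝[I] x) (𝓝 0) := by
    simpa using (((hgI.comp tendsto_snd).sub (hgI.comp tendsto_fst)).abs).const_mul C
  refine tendsto_uniformity_iff_dist_tendsto_zero.2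
    (squeeze_zero' (Eventually.of_forall fun _ => dist_nonneg) ?_ hdiff)
  have hI : ∀ᶠ p in 𝓝[I] x ×ˢ 𝓝[I] x, p.1 ∈ I ∧ p.2 ∈ I :=
    prod_mem_prod self_mem_nhdsWithin self_mem_nhdsWithin
  filter_upwards [hI] with p hp
  rw [dist_eq_norm, norm_sub_rev]
  exact h _ hp.1 _ hp.2

theorem isSolutionOn_of_freezingEstimate {N : ℕ}
    {ν : Fin N → EuclideanSpace ℝ (Fin N) → Set ℝ → ℝ} {ℓ : ℝ → ℝ} {R t₀ : ℝ} {J : Set ℝ}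
    {z : ℝ → EuclideanSpace ℝ (Fin N)} (hν : ∀ i d, IsBMeasure (ν i d)) (ht₀ : t₀ ∈ J)
    (hJ : J.OrdConnected) (hz : ContinuousOn z J) (hzR : ∀ u ∈ J, ‖z u‖ ≤ R)
    (h : ∀ i, FreezingEstimate (ν i) ℓ R z (z · i) J) : IsSolutionOn ν t₀ (z t₀) J z := by
  have hint {a b : ℝ} (ha : a ∈ J) (hb : b ∈ J) (i : Fin N) :
      IsCurveIntegral (ν i) z a b (z b i - z a i) :=
    ((h i).mono (hJ.out ha hb)).isCurveIntegral (hν i) (hz.mono (hJ.out ha hb))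
      fun u hu => hzR u (hJ.out ha hb hu)
  refine ⟨ht₀, rfl, hz, fun t ht i => ?_⟩
  rcases le_or_gt t₀ t with hle | hlt
  · exact .inl ⟨hle, hint ht₀ ht i⟩
  · exact .inr ⟨hlt, by simpa only [neg_sub] using hint ht ht₀ i⟩

theorem ordConnected_uIcc_sdiff_right {α : Type*} [LinearOrder α] (a b : α) :
    (uIcc a b \ {b}).OrdConnected := by
  rcases le_total a b with h | h
  · rw [uIcc_of_le h, Icc_sdiff_right]
    exact ordConnected_Ico
  · rw [uIcc_of_ge h, Icc_sdiff_left]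
    exact ordConnected_Ioc

theorem uIoo_subset_uIcc_sdiff_right {α : Type*} [LinearOrder α] (a b : α) :
    uIoo a b ⊆ uIcc a b \ {b} :=
  fun _ hu => ⟨uIoo_subset_uIcc_self hu, fun h => right_notMem_uIoo (h ▸ hu)⟩

section Continuation

variable {N : ℕ} {ν : Fin N → EuclideanSpace ℝ (Fin N) → Set ℝ → ℝ} {m l : ℕ → Measure ℝ}
  {t₀ x : ℝ} {y₀ : EuclideanSpace ℝ (Fin N)} {S : Set ℝ} {y : ℝ → EuclideanSpace ℝ (Fin N)}
  {j : ℕ}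

theorem IsSolutionOn.exists_isSolutionOn_uIcc (h : IsSolutionOn ν t₀ y₀ S y)
    (hν : IsNDimParamBMeasure ν m l) (hj : 1 ≤ j) (hx : x ≠ t₀) (hS : uIcc t₀ x \ {x} ⊆ S)
    (hy : ∀ u ∈ uIcc t₀ x \ {x}, ‖y u‖ ≤ j) :
    ∃ z, IsSolutionOn ν t₀ y₀ (uIcc t₀ x) z ∧ ∀ u ∈ uIcc t₀ x, ‖z u‖ ≤ j := by
  obtain ⟨hm, hl, hbound, -⟩ := hν.2 j hj
  have hconn := ordConnected_uIcc_sdiff_right t₀ x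
  have hsub := uIoo_subset_uIcc_sdiff_right t₀ x
  have hxI : x ∈ closure (uIcc t₀ x \ {x}) :=
    closure_mono hsub (closure_uIoo hx.symm ▸ right_mem_uIcc)
  have := mem_closure_iff_nhdsWithin_neBot.1 hxI
  obtain ⟨v, hv⟩ := exists_tendsto_of_norm_sub_le hxI hm.continuous_primitive.continuousAt
    fun s hs t ht => h.norm_sub_le hν hj hconn hS hy hs ht
  have hvj : ‖v‖ ≤ j := le_of_tendsto hv.norm (eventually_mem_nhdsWithin.mono hy)
  have hzy : EqOn (Function.update y x v) y (uIcc t₀ x \ {x}) :=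
    fun u hu => Function.update_of_ne hu.2 _ _
  have hz : ContinuousOn (Function.update y x v) (uIcc t₀ x) :=
    continuousOn_update_iff.2 ⟨h.2.2.1.mono hS, fun _ => hv⟩
  have hzj : ∀ u ∈ uIcc t₀ x, ‖Function.update y x v u‖ ≤ j := by
    intro u hu
    rcases eq_or_ne u x with rfl | hux
    · rwa [Function.update_self]
    · rw [hzy ⟨hu, hux⟩]
      exact hy u ⟨hu, hux⟩
  have hz₀ : Function.update y x v t₀ = y₀ := by rw [hzy ⟨left_mem_uIcc, hx.symm⟩, h.2.1]
  refine ⟨_, hz₀ ▸ isSolutionOn_of_freezingEstimate hν.1 left_mem_uIcc ordConnected_uIcc hz hzj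
    (ℓ := primitive (l j).real) fun i => ?_, hzj⟩
  have hy_est := (h.freezingEstimate hν hj hconn hS hy i).mono hsub
  exact (hy_est.congr ordConnected_Ioo (hzy.symm.mono hsub)
    fun u hu => congrArg (· i) (hzy.symm (hsub hu))).Icc_of_Ioo (by fun_prop)
    hl.continuous_primitive fun d hd => (hbound i d hd).continuous_primitive (hν.1 i d) hm

theorem IsMaximalSolution.mem_of_bounded (h : IsMaximalSolution ν t₀ y₀ S y)
    (hν : IsNDimParamBMeasure ν m l) (hj : 1 ≤ j) (hx : x ≠ t₀) (hS : uIcc t₀ x \ {x} ⊆ S)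
    (hy : ∀ u ∈ uIcc t₀ x \ {x}, ‖y u‖ ≤ j) : x ∈ S ∧ ‖y x‖ ≤ j := by
  obtain ⟨hsol, -, -, hmax⟩ := h
  obtain ⟨z, hz, hzj⟩ := hsol.exists_isSolutionOn_uIcc hν hj hx hS hy
  obtain ⟨hsub, heq⟩ := hmax _ ordConnected_uIcc z hz
  exact ⟨hsub right_mem_uIcc, heq right_mem_uIcc ▸ hzj x right_mem_uIcc⟩

end Continuation

theorem tendstoUniformlyOn_of_equicontinuousOn {ι X α : Type*} [TopologicalSpace X]
    [UniformSpace α] {𝓕 : Filter ι} {F : ι → X → α} {f : X → α} {K : Set X} (hK : IsCompact K)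
    (hF : EquicontinuousOn F K) (h : ∀ x ∈ K, Tendsto (F · x) 𝓕 (𝓝 (f x))) :
    TendstoUniformlyOn F f 𝓕 K := by
  have hK' : ∀ K' ∈ ({K} : Set (Set X)), IsCompact K' := fun _ hK' => hK' ▸ hK
  have hF' : ∀ K' ∈ ({K} : Set (Set X)), EquicontinuousOn F K' := fun _ hK' => hK' ▸ hF
  have hunif := (EquicontinuousOn.tendsto_uniformOnFun_iff_pi' hK' hF' 𝓕 f).2
    (tendsto_pi_nhds.2 fun x => h x (by simpa only [sUnion_singleton] using x.2))
  exact UniformOnFun.tendsto_iff_tendstoUniformlyOn.1 hunif K rfl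

theorem tendsto_primitive_ratCast {ι : Type*} {𝓕 : Filter ι} {μn : ι → Set ℝ → ℝ}
    {μ : Set ℝ → ℝ} (hμn : ∀ n, IsBMeasure (μn n)) (hμ : IsBMeasure μ)
    (h : ∀ q₁ q₂ : ℚ, q₁ < q₂ →
      Tendsto (fun n => μn n (Icc (q₁ : ℝ) q₂)) 𝓕 (𝓝 (μ (Icc (q₁ : ℝ) q₂)))) (q : ℚ) :
    Tendsto (fun n => primitive (μn n) q) 𝓕 (𝓝 (primitive μ q)) := by
  have hIcc (q₁ q₂ : ℚ) :
      Tendsto (fun n => μn n (Icc (q₁ : ℝ) q₂)) 𝓕 (𝓝 (μ (Icc (q₁ : ℝ) q₂))) := by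
    rcases lt_trichotomy q₁ q₂ with hlt | rfl | hgt
    · exact h q₁ q₂ hlt
    · simpa only [hμ.Icc_self, (hμn _).Icc_self] using tendsto_const_nhds
    · have hempty : Icc (q₁ : ℝ) q₂ = ∅ := Icc_eq_empty (by exact_mod_cast hgt.not_ge)
      simpa only [hempty, hμ.empty, (hμn _).empty] using tendsto_const_nhds
  simpa [primitive] using (hIcc 0 q).sub (hIcc q 0)

namespace IsNDimParamBMeasure

section Equicontinuity

variable {ι : Type*} {N : ℕ} {ν : ι → Fin N → E → Set ℝ → ℝ} {m l : ι → ℕ → Measure ℝ}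

theorem equicontinuous_primitive (hν : ∀ n, IsNDimParamBMeasure (ν n) (m n) (l n))
    (hm : ∀ j, 1 ≤ j → Equicontinuous fun n => primitive (m n j).real)
    (hl : ∀ j, 1 ≤ j → ∀ t, ∃ C, ∀ n, |primitive (l n j).real t| ≤ C) (i : Fin N) :
    Equicontinuous fun n (p : ℝ × E) => primitive (ν n i p.2) p.1 := by
  rintro ⟨t, d⟩
  obtain ⟨j, hj⟩ := exists_nat_gt ‖d‖
  have hj₁ : 1 ≤ j := by exact_mod_cast (norm_nonneg d).trans_lt hj
  obtain ⟨C, hC⟩ := hl j hj₁ t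
  refine Metric.equicontinuousAt_iff_right.2 fun ε hε => ?_
  have htime : ∀ᶠ p : ℝ × E in 𝓝 (t, d), ∀ n,
      dist (primitive (m n j).real t) (primitive (m n j).real p.1) < ε / 2 :=
    (continuousAt_fst (p := (t, d))).eventually
      (Metric.equicontinuousAt_iff_right.1 (hm j hj₁ t) _ (half_pos hε))
  have hspace : ∀ᶠ p : ℝ × E in 𝓝 (t, d), ‖p.2 - d‖ * C < ε / 2 := by
    have hcont : Continuous fun p : ℝ × E => ‖p.2 - d‖ * C := by fun_prop
    exact hcont.continuousAt.eventually_lt continuousAt_const (by simpa using hε)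
  have hball : ∀ᶠ p : ℝ × E in 𝓝 (t, d), ‖p.2‖ < j :=
    continuousAt_snd.norm.eventually_lt continuousAt_const hj
  filter_upwards [htime, hspace, hball] with p hpt hps hpj n
  obtain ⟨hmn, hln, hbound, hdiff⟩ := (hν n).2 j hj₁
  have h₁ := (hbound i p.2 hpj.le).abs_primitive_sub_le ((hν n).1 i p.2) hmn t p.1
  have h₂ := (hdiff i p.2 d hpj.le hj.le).abs_primitive_sub_le ((hν n).1 i p.2) ((hν n).1 i d)
    hln 0 t
  simp only [((hν n).1 i _).primitive_zero, hln.isBMeasure.primitive_zero, sub_zero] at h₂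
  have h₃ := mul_le_mul_of_nonneg_left (hC n) (norm_nonneg (p.2 - d))
  have h₄ := hpt n
  rw [dist_comm, Real.dist_eq] at h₄ ⊢
  linarith [abs_sub_le (primitive (ν n i p.2) p.1) (primitive (ν n i p.2) t)
    (primitive (ν n i d) t)]

end Equicontinuity

variable {N : ℕ} {ν : Fin N → E → Set ℝ → ℝ} {m l : ℕ → Measure ℝ}

theorem continuous_primitive (hν : IsNDimParamBMeasure ν m l) (i : Fin N) :
    Continuous fun p : ℝ × E => primitive (ν i p.2) p.1 := by
  have hequi := equicontinuous_primitive (ι := Unit) (fun _ => hν)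
    (fun j hj => equicontinuous_unique.2 (hν.2 j hj).1.continuous_primitive)
    (fun j _ t => ⟨_, fun _ => le_rfl⟩) i
  exact hequi.continuous ()

theorem tendstoUniformlyOn_primitive {ι : Type*} {𝓕 : Filter ι}
    {νn : ι → Fin N → E → Set ℝ → ℝ} {mn ln : ι → ℕ → Measure ℝ} {D : Set E} (hD : Dense D)
    (hνn : ∀ n, IsNDimParamBMeasure (νn n) (mn n) (ln n)) (hν : IsNDimParamBMeasure ν m l)
    (hm : ∀ j, 1 ≤ j → Equicontinuous fun n => primitive (mn n j).real)
    (hl : ∀ j, 1 ≤ j → ∀ t, ∃ C, ∀ n, |primitive (ln n j).real t| ≤ C) {i : Fin N}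
    (hconv : ∀ d ∈ D, ∀ q₁ q₂ : ℚ, q₁ < q₂ →
      Tendsto (fun n => νn n i d (Icc (q₁ : ℝ) q₂)) 𝓕 (𝓝 (ν i d (Icc (q₁ : ℝ) q₂))))
    {K : Set (ℝ × E)} (hK : IsCompact K) :
    TendstoUniformlyOn (fun n p => primitive (νn n i p.2) p.1)
      (fun p => primitive (ν i p.2) p.1) 𝓕 K := by
  have hequi := equicontinuous_primitive hνn hm hl i
  have hdense : Dense (range ((↑) : ℚ → ℝ) ×ˢ D) := Dense.prod Rat.denseRange_cast hD
  have hlim := hequi.isClosed_setOfPred_tendsto (l := 𝓕) (hν.continuous_primitive i)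
  refine tendstoUniformlyOn_of_equicontinuousOn hK (hequi.equicontinuousOn K) fun p _ => ?_
  refine hlim.closure_subset_iff.2 ?_ (hdense p)
  rintro ⟨_, d⟩ ⟨⟨q, rfl⟩, hd⟩
  exact tendsto_primitive_ratCast (fun n => (hνn n).1 i d) (hν.1 i d) (hconv d hd) q

end IsNDimParamBMeasure

theorem sum_range_abs_sub_eq {u : ℕ → ℝ} (hu : Monotone u ∨ Antitone u) (n : ℕ) :
    ∑ k ∈ Finset.range n, |u (k + 1) - u k| = |u n - u 0| := by
  rcases hu with hu | hu
  · rw [abs_of_nonneg (sub_nonneg.2 (hu n.zero_le)), ← Finset.sum_range_sub]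
    exact Finset.sum_congr rfl fun k _ => abs_of_nonneg (sub_nonneg.2 (hu k.le_succ))
  · rw [abs_of_nonpos (sub_nonpos.2 (hu n.zero_le)), ← Finset.sum_range_sub,
      ← Finset.sum_neg_distrib]
    exact Finset.sum_congr rfl fun k _ => abs_of_nonpos (sub_nonpos.2 (hu k.le_succ))

theorem exists_grid_uIcc (a b : ℝ) {K : ℕ} (hK : 0 < K) :
    ∃ p : ℕ → ℝ, p 0 = a ∧ p K = b ∧ (Monotone p ∨ Antitone p) ∧ (∀ k, p k ∈ uIcc a b) ∧
      ∀ k, |p (k + 1) - p k| ≤ |b - a| / K := by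
  have hK' : (0 : ℝ) < K := by exact_mod_cast hK
  set c : ℕ → ℝ := fun k => min (k / K) 1 with hc
  have hc_mono : Monotone c := fun _ _ h => min_le_min_right 1 (by gcongr)
  have hc_mem (k : ℕ) : c k ∈ Icc (0 : ℝ) 1 := ⟨by positivity, min_le_right _ _⟩
  have hc_step (k : ℕ) : |c (k + 1) - c k| ≤ 1 / K := by
    refine (abs_min_sub_min_le_max _ _ _ _).trans ?_
    rw [sub_self, abs_zero, max_eq_left (abs_nonneg _), ← sub_div, Nat.cast_succ,
      add_sub_cancel_left, abs_of_pos (by positivity)]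
  refine ⟨fun k => AffineMap.lineMap a b (c k), ?_, ?_, ?_, fun k => ?_, fun k => ?_⟩
  · simp [hc]
  · simp [hc, hK'.ne']
  · rcases le_total a b with h | h
    · exact .inl ((AffineMap.lineMap_mono h).comp hc_mono)
    · exact .inr ((AffineMap.lineMap_anti h).comp_monotone hc_mono)
  · rw [← segment_eq_uIcc, segment_eq_image_lineMap]
    exact mem_image_of_mem _ (hc_mem k)
  · simp only [AffineMap.lineMap_apply_ring', add_sub_add_right_eq_sub, ← sub_mul, abs_mul]
    calc _ ≤ 1 / K * |b - a| := by gcongr; exact hc_step k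
      _ = |b - a| / K := by ring

section Comparison

variable {N : ℕ} {ν₁ ν₂ : Fin N → EuclideanSpace ℝ (Fin N) → Set ℝ → ℝ} {ℓ₁ ℓ₂ : ℝ → ℝ}
  {R η κ t₀ t : ℝ} {x z : ℝ → EuclideanSpace ℝ (Fin N)} {J : Set ℝ}

theorem norm_sub_le_of_freezingEstimate {p q : ℝ}
    (hx : ∀ i, FreezingEstimate (ν₁ i) ℓ₁ R x (x · i) J)
    (hz : ∀ i, FreezingEstimate (ν₂ i) ℓ₂ R z (z · i) J) (hp : p ∈ J) (hq : q ∈ J)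
    (hzp : ‖z p‖ ≤ R) (hxη : ∀ u ∈ uIcc p q, ‖x u - x p‖ ≤ η)
    (hzη : ∀ u ∈ uIcc p q, ‖z u - z p‖ ≤ η)
    (hκ : ∀ i, ∀ u ∈ J, |primitive (ν₁ i (z p)) u - primitive (ν₂ i (z p)) u| ≤ κ) :
    ‖x q - z q‖ ≤ (1 + N * |ℓ₁ q - ℓ₁ p|) * ‖x p - z p‖ +
      N * (η * (|ℓ₁ q - ℓ₁ p| + |ℓ₂ q - ℓ₂ p|) + 2 * κ) := by
  have hxz : ∀ u ∈ uIcc p q, ‖x u - z p‖ ≤ η + ‖x p - z p‖ := fun u hu =>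
    (norm_sub_le_norm_sub_add_norm_sub _ (x p) _).trans (add_le_add_left (hxη u hu) _)
  have hcoord (i : Fin N) : |((x q - z q) - (x p - z p)) i| ≤
      (η + ‖x p - z p‖) * |ℓ₁ q - ℓ₁ p| + η * |ℓ₂ q - ℓ₂ p| + 2 * κ := by
    have h₁ := (hx i).abs_sub_sub_le hp hq hzp hxz
    have h₂ := (hz i).abs_sub_sub_le hp hq hzp hzη
    have h₃ := hκ i p hp
    have h₄ := hκ i q hq
    simp only [PiLp.sub_apply]
    rw [abs_le] at h₁ h₂ h₃ h₄ ⊢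
    constructor <;> linarith
  calc ‖x q - z q‖ ≤ ‖x p - z p‖ + ‖(x q - z q) - (x p - z p)‖ := norm_le_norm_add_norm_sub' _ _
    _ ≤ ‖x p - z p‖ +
        N * ((η + ‖x p - z p‖) * |ℓ₁ q - ℓ₁ p| + η * |ℓ₂ q - ℓ₂ p| + 2 * κ) := by
      gcongr
      exact norm_le_mul_of_forall_abs_apply_le hcoord
    _ = _ := by ring

theorem norm_sub_le_exp_of_freezingEstimate {K : ℕ} (hK : 0 < K) (hη : 0 ≤ η) (hκ₀ : 0 ≤ κ)
    (hℓ₁ : Monotone ℓ₁) (hℓ₂ : Monotone ℓ₂)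
    (hx : ∀ i, FreezingEstimate (ν₁ i) ℓ₁ R x (x · i) (uIcc t₀ t))
    (hz : ∀ i, FreezingEstimate (ν₂ i) ℓ₂ R z (z · i) (uIcc t₀ t))
    (hzR : ∀ u ∈ uIcc t₀ t, ‖z u‖ ≤ R)
    (hxη : ∀ u ∈ uIcc t₀ t, ∀ v ∈ uIcc t₀ t, |u - v| ≤ |t - t₀| / K → ‖x u - x v‖ ≤ η)
    (hzη : ∀ u ∈ uIcc t₀ t, ∀ v ∈ uIcc t₀ t, |u - v| ≤ |t - t₀| / K → ‖z u - z v‖ ≤ η)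
    (hκ : ∀ i, ∀ u ∈ uIcc t₀ t, ∀ d, ‖d‖ ≤ R →
      |primitive (ν₁ i d) u - primitive (ν₂ i d) u| ≤ κ) :
    ‖x t - z t‖ ≤ (‖x t₀ - z t₀‖ +
      N * (η * (|ℓ₁ t - ℓ₁ t₀| + |ℓ₂ t - ℓ₂ t₀|) + 2 * (K * κ))) *
        Real.exp (N * |ℓ₁ t - ℓ₁ t₀|) := by
  obtain ⟨p, rfl, rfl, hp_mono, hp, hp_step⟩ := exists_grid_uIcc t₀ t hK
  have hcell {k : ℕ} {u : ℝ} (hu : u ∈ uIcc (p k) (p (k + 1))) :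
      u ∈ uIcc (p 0) (p K) ∧ |u - p k| ≤ |p K - p 0| / K :=
    ⟨uIcc_subset_uIcc (hp k) (hp (k + 1)) hu, (abs_sub_left_of_mem_uIcc hu).trans (hp_step k)⟩
  have hsum {ℓ : ℝ → ℝ} (hℓ : Monotone ℓ) :
      ∑ k ∈ Finset.range K, |ℓ (p (k + 1)) - ℓ (p k)| = |ℓ (p K) - ℓ (p 0)| :=
    sum_range_abs_sub_eq (u := ℓ ∘ p) (hp_mono.imp hℓ.comp hℓ.comp_antitone) K
  have hgronwall := discrete_gronwall (n₀ := 0) (n := K) (u := fun k => ‖x (p k) - z (p k)‖)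
    (c := fun k => N * |ℓ₁ (p (k + 1)) - ℓ₁ (p k)|)
    (b := fun k => N * (η * (|ℓ₁ (p (k + 1)) - ℓ₁ (p k)| + |ℓ₂ (p (k + 1)) - ℓ₂ (p k)|) + 2 * κ))
    (norm_nonneg _)
    (fun k _ => norm_sub_le_of_freezingEstimate hx hz (hp k) (hp (k + 1)) (hzR _ (hp k))
      (fun u hu => hxη u (hcell hu).1 _ (hp k) (hcell hu).2)
      (fun u hu => hzη u (hcell hu).1 _ (hp k) (hcell hu).2)
      fun i u hu => hκ i u hu _ (hzR _ (hp k)))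
    (fun k _ => by positivity) (fun k _ => by positivity) K.zero_le
  simpa only [← Finset.range_eq_Ico, ← Finset.mul_sum, Finset.sum_add_distrib, hsum hℓ₁,
    hsum hℓ₂, Finset.sum_const, Finset.card_range, nsmul_eq_mul] using hgronwall

end Comparison

theorem eventually_mem_uIcc {α : Type*} [LinearOrder α] [TopologicalSpace α] [OrderTopology α]
    {a u x : α} (hu : u ∈ uIcc a x) (hux : u ≠ x) : ∀ᶠ g in 𝓝 x, u ∈ uIcc a g := by
  rcases lt_or_gt_of_ne hux with hux | hux
  · filter_upwards [lt_mem_nhds hux] with g hg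
    exact mem_uIcc_of_le ((mem_uIcc.1 hu).elim And.left fun h => absurd h.1 hux.not_ge) hg.le
  · filter_upwards [gt_mem_nhds hux] with g hg
    exact mem_uIcc_of_ge hg.le ((mem_uIcc.1 hu).elim (fun h => absurd h.2 hux.not_ge) And.right)

theorem forall_of_continuous_induction {α : Type*} [ConditionallyCompleteLinearOrder α]
    [TopologicalSpace α] [OrderTopology α] [DenselyOrdered α] {P : α → Prop} {t₀ : α} (h₀ : P t₀)
    (hopen : ∀ x, P x → ∀ᶠ u in 𝓝 x, P u)
    (hclosed : ∀ x, x ≠ t₀ → (∀ u ∈ uIcc t₀ x \ {x}, P u) → P x) (x : α) : P x := by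
  set G : Set α := {x | ∀ u ∈ uIcc t₀ x, P u}
  suffices hG : IsClopen G from
    (hG.eq_univ ⟨t₀, by simpa [G] using h₀⟩ ▸ mem_univ x : x ∈ G) x right_mem_uIcc
  refine ⟨isClosed_of_closure_subset fun x hx => ?_, isOpen_iff_mem_nhds.2 fun x hx => ?_⟩
  · rcases eq_or_ne x t₀ with rfl | hxt₀
    · simpa [G] using h₀
    have hlt : ∀ u ∈ uIcc t₀ x \ {x}, P u := by
      rintro u ⟨hu, hux⟩
      obtain ⟨g, hgG, hug⟩ :=
        ((mem_closure_iff_frequently.1 hx).and_eventually (eventually_mem_uIcc hu hux)).exists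
      exact hgG u hug
    intro u hu
    rcases eq_or_ne u x with rfl | hux
    · exact hclosed u hxt₀ hlt
    · exact hlt u ⟨hu, hux⟩
  · have hsegment : ∀ᶠ g in 𝓝 x, ∀ u ∈ uIcc x g, P u :=
      (tendsto_const_nhds.uIcc tendsto_id).eventually
        (eventually_smallSets_forall.2 (hopen x (hx x right_mem_uIcc)))
    filter_upwards [hsegment] with g hg u hu
    rcases uIcc_subset_uIcc_union_uIcc (b := x) hu with hu | hu
    · exact hx u hu
    · exact hg u hu

theorem uniformEquicontinuousOn_of_equicontinuousOn {ι X α : Type*} [UniformSpace X]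
    [UniformSpace α] {F : ι → X → α} {K : Set X} (hK : IsCompact K) (hF : EquicontinuousOn F K) :
    UniformEquicontinuousOn F K :=
  uniformEquicontinuousOn_iff_uniformContinuousOn.2
    (hK.uniformContinuousOn_of_continuous (equicontinuousOn_iff_continuousOn.1 hF))

theorem exists_forall_abs_sub_le_of_monotone {ι : Type*} {f : ι → ℝ → ℝ} (hf : ∀ n, Monotone (f n))
    (hbound : ∀ t, ∃ C, ∀ n, |f n t| ≤ C) (a b : ℝ) :
    ∃ Λ, ∀ n, ∀ s ∈ Icc a b, ∀ t ∈ Icc a b, |f n s - f n t| ≤ Λ := by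
  obtain ⟨A, hA⟩ := hbound a
  obtain ⟨B, hB⟩ := hbound b
  refine ⟨B + A, fun n s hs t ht => ?_⟩
  calc |f n s - f n t| ≤ f n b - f n a :=
        abs_sub_le_of_le_of_le (hf n hs.1) (hf n hs.2) (hf n ht.1) (hf n ht.2)
    _ ≤ B + A := by linarith [(abs_le.1 (hA n)).1, (abs_le.1 (hB n)).2]

theorem IsSolutionOn.norm_sub_le_exp {N : ℕ} {ν₁ ν₂ : Fin N → EuclideanSpace ℝ (Fin N) → Set ℝ → ℝ}
    {m₁ m₂ l₁ l₂ : ℕ → Measure ℝ} {t₀ t η κ Λ : ℝ} {x₀ z₀ : EuclideanSpace ℝ (Fin N)}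
    {S₁ S₂ : Set ℝ} {x z : ℝ → EuclideanSpace ℝ (Fin N)} {j K : ℕ}
    (hx : IsSolutionOn ν₁ t₀ x₀ S₁ x) (hz : IsSolutionOn ν₂ t₀ z₀ S₂ z)
    (hν₁ : IsNDimParamBMeasure ν₁ m₁ l₁) (hν₂ : IsNDimParamBMeasure ν₂ m₂ l₂) (hj : 1 ≤ j)
    (hxS : uIcc t₀ t ⊆ S₁) (hzS : uIcc t₀ t ⊆ S₂) (hxj : ∀ u ∈ uIcc t₀ t, ‖x u‖ ≤ j)
    (hzj : ∀ u ∈ uIcc t₀ t, ‖z u‖ ≤ j) (hK : 0 < K) (hη : 0 ≤ η) (hκ₀ : 0 ≤ κ)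
    (hΛ₁ : |primitive (l₁ j).real t - primitive (l₁ j).real t₀| ≤ Λ)
    (hΛ₂ : |primitive (l₂ j).real t - primitive (l₂ j).real t₀| ≤ Λ)
    (hxη : ∀ u ∈ uIcc t₀ t, ∀ v ∈ uIcc t₀ t, |u - v| ≤ |t - t₀| / K → ‖x u - x v‖ ≤ η)
    (hzη : ∀ u ∈ uIcc t₀ t, ∀ v ∈ uIcc t₀ t, |u - v| ≤ |t - t₀| / K → ‖z u - z v‖ ≤ η)
    (hκ : ∀ i, ∀ u ∈ uIcc t₀ t, ∀ d, ‖d‖ ≤ (j : ℝ) →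
      |primitive (ν₁ i d) u - primitive (ν₂ i d) u| ≤ κ) :
    ‖x t - z t‖ ≤ (‖x₀ - z₀‖ + N * (η * (Λ + Λ) + 2 * (K * κ))) * Real.exp (N * Λ) := by
  have hcompare := norm_sub_le_exp_of_freezingEstimate hK hη hκ₀
    (hν₁.2 j hj).2.1.monotone_primitive (hν₂.2 j hj).2.1.monotone_primitive
    (hx.freezingEstimate hν₁ hj ordConnected_uIcc hxS hxj)
    (hz.freezingEstimate hν₂ hj ordConnected_uIcc hzS hzj) hzj hxη hzη hκ
  rw [hx.2.1, hz.2.1] at hcompare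
  have hΛ : 0 ≤ Λ := (abs_nonneg _).trans hΛ₁
  exact hcompare.trans (by gcongr)

theorem IsMaximalSolution.forall_mem_and_norm_sub_lt {N : ℕ}
    {ν : Fin N → EuclideanSpace ℝ (Fin N) → Set ℝ → ℝ} {m l : ℕ → Measure ℝ} {t₀ a b ε : ℝ}
    {y₀ : EuclideanSpace ℝ (Fin N)} {S : Set ℝ} {x y : ℝ → EuclideanSpace ℝ (Fin N)} {j : ℕ}
    (h : IsMaximalSolution ν t₀ y₀ S x) (hν : IsNDimParamBMeasure ν m l) (hj : 1 ≤ j)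
    (ht₀ : t₀ ∈ Icc a b) (hy : ContinuousOn y (Icc a b)) (hxy₀ : ‖x t₀ - y t₀‖ < ε)
    (hyj : ∀ u ∈ Icc a b, ‖y u‖ + ε ≤ j)
    (hapriori : ∀ t ∈ Icc a b, uIcc t₀ t ⊆ S → (∀ u ∈ uIcc t₀ t, ‖x u‖ ≤ j) → ‖x t - y t‖ < ε) :
    ∀ t ∈ Icc a b, t ∈ S ∧ ‖x t - y t‖ < ε := by
  refine forall_of_continuous_induction (fun _ => ⟨h.1.1, hxy₀⟩) (fun t ht => ?_)
    fun t htt₀ hlt ht => ?_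
  · by_cases htab : t ∈ Icc a b
    · obtain ⟨htS, htε⟩ := ht htab
      have hx : ContinuousAt x t := h.1.2.2.1.continuousAt (h.2.1.mem_nhds htS)
      have hclose : ∀ᶠ u in 𝓝[Icc a b] t, ‖x u - y u‖ < ε :=
        (hx.continuousWithinAt.sub (hy t htab)).norm.eventually_lt_const htε
      filter_upwards [h.2.1.mem_nhds htS, eventually_nhdsWithin_iff.1 hclose] with u huS huε hu
      exact ⟨huS, huε hu⟩
    · filter_upwards [isClosed_Icc.isOpen_compl.mem_nhds htab] with u hu huab
      exact absurd huab hu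
  · have hsub : uIcc t₀ t ⊆ Icc a b := ordConnected_Icc.uIcc_subset ht₀ ht
    have hbound : ∀ u ∈ uIcc t₀ t \ {t}, ‖x u‖ ≤ j := fun u hu => by
      linarith [norm_le_norm_add_norm_sub' (x u) (y u), hyj u (hsub hu.1),
        (hlt u hu (hsub hu.1)).2]
    have hltS : uIcc t₀ t \ {t} ⊆ S := fun u hu => (hlt u hu (hsub hu.1)).1
    obtain ⟨htS, htj⟩ := h.mem_of_bounded hν hj htt₀ hltS hbound
    refine ⟨htS, hapriori t ht (h.2.2.1.uIcc_subset h.1.1 htS) fun u hu => ?_⟩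
    rcases eq_or_ne u t with rfl | hut
    · exact htj
    · exact hbound u ⟨hu, hut⟩

theorem equicontinuous_primitive_of_forall_Icc_lt {ι : Type*} {m : ι → Measure ℝ}
    (hm : ∀ n, GoodMeasure (m n))
    (h : ∀ ε > (0 : ℝ), ∃ δ > (0 : ℝ), ∀ s t, 0 ≤ t - s → t - s < δ →
      ∀ n, m n (Icc s t) < ENNReal.ofReal ε) :
    Equicontinuous fun n => primitive (m n).real := by
  refine fun t₀ => Metric.equicontinuousAt_iff.2 fun ε hε => ?_
  obtain ⟨δ, hδ, hmδ⟩ := h ε hε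
  have hle {s t : ℝ} (hst : s ≤ t) (hd : t - s < δ) (n : ι) :
      |primitive (m n).real t - primitive (m n).real s| < ε := by
    rw [(hm n).isBMeasure.primitive_sub_primitive hst, abs_of_nonneg measureReal_nonneg]
    exact ENNReal.toReal_lt_of_lt_ofReal (hmδ s t (sub_nonneg.2 hst) hd n)
  refine ⟨δ, hδ, fun t ht n => ?_⟩
  rw [Real.dist_eq] at ht ⊢
  rcases le_total t t₀ with htt₀ | htt₀
  · exact hle htt₀ ((le_abs_self _).trans_lt (abs_sub_comm t t₀ ▸ ht)) n
  · exact abs_sub_comm (primitive _ t₀) _ ▸ hle htt₀ ((le_abs_self _).trans_lt ht) n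

theorem exists_forall_abs_primitive_le_of_forall_Icc_add_one_le {ι : Type*} {l : ι → Measure ℝ}
    {c : ℝ} (hl : ∀ n, GoodMeasure (l n)) (h : ∀ t n, (l n).real (Icc t (t + 1)) ≤ c) (t : ℝ) :
    ∃ C, ∀ n, |primitive (l n).real t| ≤ C := by
  have hstep (n : ι) (s : ℝ) : primitive (l n).real (s + 1) - primitive (l n).real s ≤ c := by
    rw [(hl n).isBMeasure.primitive_sub_primitive (le_add_of_nonneg_right zero_le_one)]
    exact h s n
  have hup (n : ι) (k : ℕ) : primitive (l n).real k ≤ k * c := by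
    induction k with
    | zero => simp [(hl n).isBMeasure.primitive_zero]
    | succ k ih =>
      push_cast
      linarith [hstep n k]
  have hdown (n : ι) (k : ℕ) : -(k * c) ≤ primitive (l n).real (-k) := by
    induction k with
    | zero => simp [(hl n).isBMeasure.primitive_zero]
    | succ k ih =>
      have hk := hstep n (-(k + 1))
      rw [show -((k : ℝ) + 1) + 1 = -k by ring] at hk
      push_cast
      linarith
  obtain ⟨k, hk⟩ := exists_nat_ge |t|
  refine ⟨k * c, fun n => abs_le.2 ⟨?_, ?_⟩⟩
  · exact (hdown n k).trans ((hl n).monotone_primitive (abs_le.1 hk).1)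
  · exact ((hl n).monotone_primitive (abs_le.1 hk).2).trans (hup n k)

section Convergence

variable {ι : Type*} {𝓕 : Filter ι} {N : ℕ}
  {νn : ι → Fin N → EuclideanSpace ℝ (Fin N) → Set ℝ → ℝ} {mn ln : ι → ℕ → Measure ℝ}
  {ν : Fin N → EuclideanSpace ℝ (Fin N) → Set ℝ → ℝ} {m l : ℕ → Measure ℝ}
  {D : Set (EuclideanSpace ℝ (Fin N))} {t₀ a b ε : ℝ} {y₀n : ι → EuclideanSpace ℝ (Fin N)}
  {y₀ : EuclideanSpace ℝ (Fin N)} {Sn : ι → Set ℝ} {S : Set ℝ}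
  {yn : ι → ℝ → EuclideanSpace ℝ (Fin N)} {y : ℝ → EuclideanSpace ℝ (Fin N)} {j : ℕ}

theorem exists_forall_norm_sub_le_of_equicontinuous_primitive
    (hνn : ∀ n, IsNDimParamBMeasure (νn n) (mn n) (ln n))
    (hyn : ∀ n, IsSolutionOn (νn n) t₀ (y₀n n) (Sn n) (yn n)) (hj : 1 ≤ j)
    (hm : Equicontinuous fun n => primitive (mn n j).real) (hε : 0 < ε) :
    ∃ δ > 0, ∀ n, ∀ J ⊆ Icc a b, J.OrdConnected → J ⊆ Sn n → (∀ u ∈ J, ‖yn n u‖ ≤ j) →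
      ∀ u ∈ J, ∀ v ∈ J, |u - v| < δ → ‖yn n u - yn n v‖ ≤ ε := by
  obtain ⟨ε', hε', hNε⟩ := exists_pos_mul_lt hε N
  have hm' : UniformEquicontinuousOn (fun n => primitive (mn n j).real) (Icc a b) :=
    uniformEquicontinuousOn_of_equicontinuousOn isCompact_Icc (hm.equicontinuousOn _)
  obtain ⟨δ, hδ, h⟩ := (Metric.uniformity_basis_dist.inf_principal
    (Icc a b ×ˢ Icc a b)).uniformEquicontinuousOn_iff_left.1 hm' _ (Metric.dist_mem_uniformity hε')
  refine ⟨δ, hδ, fun n J hJab hJ hJS hbound u hu v hv huv => ?_⟩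
  calc ‖yn n u - yn n v‖ ≤ N * |primitive (mn n j).real u - primitive (mn n j).real v| :=
        (hyn n).norm_sub_le (hνn n) hj hJ hJS hbound hv hu
    _ ≤ N * ε' := by gcongr; exact (h u v ⟨huv, hJab hu, hJab hv⟩ n).le
    _ ≤ ε := hNε.le

theorem eventually_forall_norm_sub_lt_of_bounded
    (hνn : ∀ n, IsNDimParamBMeasure (νn n) (mn n) (ln n)) (hν : IsNDimParamBMeasure ν m l)
    (hj : 1 ≤ j) (hm : Equicontinuous fun n => primitive (mn n j).real)
    (hl : ∀ t, ∃ C, ∀ n, |primitive (ln n j).real t| ≤ C)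
    (hconv : ∀ i, TendstoUniformlyOn (fun n p => primitive (νn n i p.2) p.1)
      (fun p => primitive (ν i p.2) p.1) 𝓕 (Icc a b ×ˢ Metric.closedBall 0 j))
    (hy₀ : Tendsto y₀n 𝓕 (𝓝 y₀)) (hyn : ∀ n, IsSolutionOn (νn n) t₀ (y₀n n) (Sn n) (yn n))
    (hy : IsSolutionOn ν t₀ y₀ S y) (ht₀ : t₀ ∈ Icc a b) (hS : Icc a b ⊆ S)
    (hyj : ∀ u ∈ Icc a b, ‖y u‖ ≤ j) (hε : 0 < ε) :
    ∀ᶠ n in 𝓕, ∀ t ∈ Icc a b, uIcc t₀ t ⊆ Sn n → (∀ u ∈ uIcc t₀ t, ‖yn n u‖ ≤ j) →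
      ‖yn n t - y t‖ < ε := by
  obtain ⟨Λ₁, hΛ₁⟩ := exists_forall_abs_sub_le_of_monotone
    (fun n => ((hνn n).2 j hj).2.1.monotone_primitive) hl a b
  obtain ⟨Λ₂, hΛ₂⟩ := exists_forall_abs_sub_le_of_monotone (ι := Unit)
    (fun _ => (hν.2 j hj).2.1.monotone_primitive) (fun _ => ⟨_, fun _ => le_rfl⟩) a b
  set Λ := max Λ₁ Λ₂
  obtain ⟨η, hη, hηε⟩ := exists_pos_mul_lt hε ((1 + N * (2 * Λ + 2)) * Real.exp (N * Λ))
  obtain ⟨δ₁, hδ₁, hyn_osc⟩ :=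
    exists_forall_norm_sub_le_of_equicontinuous_primitive (a := a) (b := b) hνn hyn hj hm hη
  obtain ⟨δ₂, hδ₂, hy_osc⟩ := Metric.uniformContinuousOn_iff_le.1
    (isCompact_Icc.uniformContinuousOn_of_continuous (hy.2.2.1.mono hS)) η hη
  obtain ⟨K, hK, hKδ⟩ : ∃ K : ℕ, 0 < K ∧ (b - a) / K < min δ₁ δ₂ :=
    ((eventually_gt_atTop 0).and ((tendsto_const_div_atTop_nhds_zero_nat
      (b - a)).eventually_lt_const (lt_min hδ₁ hδ₂))).exists
  have hprim : ∀ᶠ n in 𝓕, ∀ i, ∀ p ∈ Icc a b ×ˢ Metric.closedBall 0 (j : ℝ),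
      dist (primitive (ν i p.2) p.1) (primitive (νn n i p.2) p.1) < η / K :=
    eventually_all.2 fun i => Metric.tendstoUniformlyOn_iff.1 (hconv i) _ (by positivity)
  filter_upwards [hprim, Metric.tendsto_nhds.1 hy₀ η hη] with n hn hn₀ t ht htS htj
  have hsub : uIcc t₀ t ⊆ Icc a b := ordConnected_Icc.uIcc_subset ht₀ ht
  have hstep : |t - t₀| / K < min δ₁ δ₂ := hKδ.trans_le' <| by
    gcongr
    exact Real.dist_le_of_mem_Icc ht ht₀
  calc ‖yn n t - y t‖
      ≤ (‖y₀n n - y₀‖ + N * (η * (Λ + Λ) + 2 * (K * (η / K)))) * Real.exp (N * Λ) :=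
        (hyn n).norm_sub_le_exp hy (hνn n) hν hj htS (hsub.trans hS) htj
          (fun u hu => hyj u (hsub hu)) hK hη.le (by positivity)
          ((hΛ₁ n t ht t₀ ht₀).trans (le_max_left _ _))
          ((hΛ₂ () t ht t₀ ht₀).trans (le_max_right _ _))
          (fun u hu v hv huv => hyn_osc n _ hsub ordConnected_uIcc htS htj u hu v hv
            (huv.trans_lt (hstep.trans_le (min_le_left _ _))))
          (fun u hu v hv huv => dist_eq_norm (y u) (y v) ▸ hy_osc u (hsub hu) v (hsub hv)
            (huv.trans (hstep.le.trans (min_le_right _ _))))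
          fun i u hu d hd => (abs_sub_comm _ _).trans_le
            (hn i (u, d) ⟨hsub hu, mem_closedBall_zero_iff.2 hd⟩).le
    _ ≤ (η + N * (η * (Λ + Λ) + 2 * (K * (η / K)))) * Real.exp (N * Λ) := by
        gcongr
        exact (dist_eq_norm (y₀n n) y₀ ▸ hn₀).le
    _ = (1 + N * (2 * Λ + 2)) * Real.exp (N * Λ) * η := by field_simp; ring
    _ < ε := hηε

theorem eventually_forall_mem_and_norm_sub_lt (hD : Dense D)
    (hνn : ∀ n, IsNDimParamBMeasure (νn n) (mn n) (ln n)) (hν : IsNDimParamBMeasure ν m l)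
    (hm : ∀ j, 1 ≤ j → Equicontinuous fun n => primitive (mn n j).real)
    (hl : ∀ j, 1 ≤ j → ∀ t, ∃ C, ∀ n, |primitive (ln n j).real t| ≤ C)
    (hconv : ∀ i, ∀ d ∈ D, ∀ q₁ q₂ : ℚ, q₁ < q₂ →
      Tendsto (fun n => νn n i d (Icc (q₁ : ℝ) q₂)) 𝓕 (𝓝 (ν i d (Icc (q₁ : ℝ) q₂))))
    (hy₀ : Tendsto y₀n 𝓕 (𝓝 y₀)) (hyn : ∀ n, IsMaximalSolution (νn n) t₀ (y₀n n) (Sn n) (yn n))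
    (hy : IsSolutionOn ν t₀ y₀ S y) (ht₀ : t₀ ∈ Icc a b) (hS : Icc a b ⊆ S) (hε : 0 < ε) :
    ∀ᶠ n in 𝓕, ∀ t ∈ Icc a b, t ∈ Sn n ∧ ‖yn n t - y t‖ < ε := by
  have hyc : ContinuousOn y (Icc a b) := hy.2.2.1.mono hS
  obtain ⟨B, hB⟩ := isCompact_Icc.exists_bound_of_continuousOn hyc
  obtain ⟨j, hj⟩ := exists_nat_ge (max (B + ε) 1)
  have hj₁ : 1 ≤ j := by exact_mod_cast (le_max_right _ _).trans hj
  have hyj : ∀ u ∈ Icc a b, ‖y u‖ + ε ≤ j := fun u hu =>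
    (add_le_add_left (hB u hu) ε).trans ((le_max_left _ _).trans hj)
  have hprim (i : Fin N) := IsNDimParamBMeasure.tendstoUniformlyOn_primitive hD hνn hν hm hl
    (hconv i) (isCompact_Icc.prod (isCompact_closedBall 0 j) :
      IsCompact (Icc a b ×ˢ Metric.closedBall (0 : EuclideanSpace ℝ (Fin N)) j))
  filter_upwards [Metric.tendsto_nhds.1 hy₀ ε hε,
    eventually_forall_norm_sub_lt_of_bounded hνn hν hj₁ (hm j hj₁) (hl j hj₁) hprim hy₀
      (fun n => (hyn n).1) hy ht₀ hS (fun u hu => by linarith [hyj u hu]) hε] with n hn₀ hapriori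
  refine (hyn n).forall_mem_and_norm_sub_lt (hνn n) hj₁ ht₀ hyc ?_ hyj hapriori
  rwa [(hyn n).1.2.1, hy.2.1, ← dist_eq_norm]

theorem stmt17_general (hD : Dense D)
    (hνn : ∀ n, IsNDimParamBMeasure (νn n) (mn n) (ln n)) (hν : IsNDimParamBMeasure ν m l)
    (hm : ∀ j, 1 ≤ j → Equicontinuous fun n => primitive (mn n j).real)
    (hl : ∀ j, 1 ≤ j → ∀ t, ∃ C, ∀ n, |primitive (ln n j).real t| ≤ C)
    (hconv : ∀ i, ∀ d ∈ D, ∀ q₁ q₂ : ℚ, q₁ < q₂ →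
      Tendsto (fun n => νn n i d (Icc (q₁ : ℝ) q₂)) 𝓕 (𝓝 (ν i d (Icc (q₁ : ℝ) q₂))))
    (hy₀ : Tendsto y₀n 𝓕 (𝓝 y₀)) (hyn : ∀ n, IsMaximalSolution (νn n) t₀ (y₀n n) (Sn n) (yn n))
    (hy : IsSolutionOn ν t₀ y₀ S y) (hS : S.OrdConnected) (hab : a ≤ b) (habS : Icc a b ⊆ S)
    (hε : 0 < ε) :
    ∀ᶠ n in 𝓕, Icc a b ⊆ Sn n ∧ ∀ t ∈ Icc a b, ‖yn n t - y t‖ < ε := by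
  have hsub : Icc (min a t₀) (max b t₀) ⊆ S := hS.out
    (min_rec' (· ∈ S) (habS (left_mem_Icc.2 hab)) hy.1)
    (max_rec' (· ∈ S) (habS (right_mem_Icc.2 hab)) hy.1)
  have habt₀ : Icc a b ⊆ Icc (min a t₀) (max b t₀) :=
    Icc_subset_Icc (min_le_left _ _) (le_max_left _ _)
  filter_upwards [eventually_forall_mem_and_norm_sub_lt hD hνn hν hm hl hconv hy₀ hyn hy
    ⟨min_le_right _ _, le_max_right _ _⟩ hsub hε] with n hn
  exact ⟨fun t ht => (hn t (habt₀ ht)).1, fun t ht => (hn t (habt₀ ht)).2⟩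

end Convergence

theorem stmt17 {N : ℕ}
    (D : Set (EuclideanSpace ℝ (Fin N))) (hDc : D.Countable) (hDd : Dense D)
    (νn : ℕ → Fin N → EuclideanSpace ℝ (Fin N) → Set ℝ → ℝ)
    (νbar : Fin N → EuclideanSpace ℝ (Fin N) → Set ℝ → ℝ)
    (mBn lBn : ℕ → ℕ → Measure ℝ) (mB lB : ℕ → Measure ℝ)
    (hνn : ∀ n, IsNDimParamBMeasure (νn n) (mBn n) (lBn n))
    (hν : IsNDimParamBMeasure νbar mB lB)
    (hmeq : ∀ j, 1 ≤ j → ∀ ε > (0 : ℝ), ∃ δ > (0 : ℝ), ∀ s t : ℝ,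
      0 ≤ t - s → t - s < δ →
        (∀ n, mBn n j (Set.Icc s t) < ENNReal.ofReal ε) ∧
        mB j (Set.Icc s t) < ENNReal.ofReal ε)
    (hlbd : ∀ j, 1 ≤ j → ∃ c > (0 : ℝ), ∀ t : ℝ,
      (∀ n, lBn n j (Set.Icc t (t + 1)) ≤ ENNReal.ofReal c) ∧
      lB j (Set.Icc t (t + 1)) ≤ ENNReal.ofReal c)
    (hconv : ∀ i : Fin N, ∀ y ∈ D, ∀ q₁ q₂ : ℚ, q₁ < q₂ →
      Tendsto (fun n => νn n i y (Set.Icc (q₁ : ℝ) (q₂ : ℝ))) atTop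
        (𝓝 (νbar i y (Set.Icc (q₁ : ℝ) (q₂ : ℝ)))))
    (y₀n : ℕ → EuclideanSpace ℝ (Fin N)) (y₀ : EuclideanSpace ℝ (Fin N))
    (hy₀ : Tendsto y₀n atTop (𝓝 y₀))
    (Sn : ℕ → Set ℝ) (yn : ℕ → ℝ → EuclideanSpace ℝ (Fin N))
    (hyn : ∀ n, IsMaximalSolution (νn n) 0 (y₀n n) (Sn n) (yn n))
    (S : Set ℝ) (y : ℝ → EuclideanSpace ℝ (Fin N))
    (hy : IsMaximalSolution νbar 0 y₀ S y) :
    ∀ a b : ℝ, a ≤ b → Set.Icc a b ⊆ S → ∀ ε > (0 : ℝ), ∃ n₀ : ℕ, ∀ n ≥ n₀,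
      Set.Icc a b ⊆ Sn n ∧ ∀ t ∈ Set.Icc a b, ‖yn n t - y t‖ < ε := by
  have hm (j : ℕ) (hj : 1 ≤ j) : Equicontinuous fun n => primitive (mBn n j).real :=
    equicontinuous_primitive_of_forall_Icc_lt (fun n => ((hνn n).2 j hj).1) fun ε hε =>
      (hmeq j hj ε hε).imp fun _ ⟨hδ, h⟩ => ⟨hδ, fun s t h₀ hst => (h s t h₀ hst).1⟩
  have hl (j : ℕ) (hj : 1 ≤ j) (t : ℝ) : ∃ C, ∀ n, |primitive (lBn n j).real t| ≤ C := by
    obtain ⟨c, hc, h⟩ := hlbd j hj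
    exact exists_forall_abs_primitive_le_of_forall_Icc_add_one_le
      (fun n => ((hνn n).2 j hj).2.1)
      (fun s n => ENNReal.toReal_le_of_le_ofReal hc.le ((h s).1 n)) t
  exact fun a b hab habS ε hε => eventually_atTop.1
    (stmt17_general hDd hνn hν hm hl hconv hy₀ hyn hy.1 hy.2.2.1 hab habS hε)
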